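/- arXiv:2104.02119 — 6 statements merged into one kernel-verified Lean document; each statement's English description precedes it below -/
import Mathlib

section
/- Let D_1 and D_2 be two vertex-disjoint Hamiltonian digraphs of orders n and m respectively, with n ≥ m, let d = gcd(n, m), and let D ∈ D_1 ⊕ D_2 be strong. If d ∈ {1, 2}, then D is pancyclic. -/
/-!
Let `X`, `Y : ℤ → α` run periodically along the two Hamiltonian cycles, and let `F i j` mean
`Y j → X i`, so that `¬ F i j` means `X i → Y j`. If `F p q` and `¬ F (p + s) (q - t)` hold with
`0 ≤ s < n` and `0 ≤ t < m`, then `X p, …, X (p + s), Y (q - t), …, Y q` is a cycle of length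
`s + t + 2` (`hasCycle_of_two_segments`).

Suppose that `D` has no cycle of length `l`. Then `F` is invariant under every shift `(s, -t)` with
`s`, `t` as above and `s + t + 2 = l`. If `l < n + m` there are two consecutive such shifts, so
`F` is invariant under their difference `(1, 1)`; if `l = n + m`, the only such shift
`(n - 1, -(m - 1))` amounts to `(-1, 1)`. Together with the periods `(n, 0)` and `(0, m)`, either
one generates `(2, 0)` and `(1, 1)` because `gcd n m ∣ 2`. Invariance under `(1, 0)` would make `F`
constant, which strong connectivity excludes. Hence `gcd n m = 2`, `l` is even, and `F i j` depends
exactly on the parity of `i + j`. In that case a cycle of length `l` is written down explicitly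
(`hasCycle_of_parity`), a contradiction.
-/

/-- A digraph: a finite vertex set together with an irreflexive arc relation
whose arcs join vertices of the digraph. -/
structure FinDigraph (α : Type) [DecidableEq α] where
  verts : Finset α
  Arc : α → α → Prop
  arc_mem_left : ∀ {u v : α}, Arc u v → u ∈ verts
  arc_mem_right : ∀ {u v : α}, Arc u v → v ∈ verts
  arc_irrefl : ∀ v : α, ¬ Arc v v

namespace FinDigraph

variable {α : Type} [DecidableEq α]

/-- `c` lists, in cyclic order, the vertices of a directed cycle of length `l` in `D`. -/
def CycleOn (D : FinDigraph α) {l : ℕ} (c : ZMod l → α) : Prop :=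
  Function.Injective c ∧ ∀ i : ZMod l, D.Arc (c i) (c (i + 1))

/-- `D` contains a directed cycle of length `l`. -/
def HasCycle (D : FinDigraph α) (l : ℕ) : Prop :=
  ∃ c : ZMod l → α, D.CycleOn c

/-- `D` contains a directed cycle of length `l` passing through `v`. -/
def HasCycleThrough (D : FinDigraph α) (l : ℕ) (v : α) : Prop :=
  ∃ c : ZMod l → α, D.CycleOn c ∧ ∃ i : ZMod l, c i = v

/-- `c` is a Hamiltonian cycle of `D`. -/
def IsHamCycle (D : FinDigraph α) {l : ℕ} (c : ZMod l → α) : Prop :=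
  D.CycleOn c ∧ ∀ v ∈ D.verts, ∃ i : ZMod l, c i = v

/-- `D` contains a directed cycle through all of its vertices. -/
def Hamiltonian (D : FinDigraph α) : Prop :=
  ∃ c : ZMod D.verts.card → α, D.IsHamCycle c

/-- For every ordered pair of vertices `u`, `v` there is a directed path from `u` to `v`. -/
def Strong (D : FinDigraph α) : Prop :=
  ∀ u ∈ D.verts, ∀ v ∈ D.verts, Relation.ReflTransGen D.Arc u v

/-- `D` (of order at least 3) has directed cycles of every length from 3 to its order. -/
def Pancyclic (D : FinDigraph α) : Prop :=
  3 ≤ D.verts.card ∧ ∀ l : ℕ, 3 ≤ l → l ≤ D.verts.card → D.HasCycle l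

/-- Every vertex of `D` lies on directed cycles of every length from 3 to the order of `D`. -/
def VertexPancyclic (D : FinDigraph α) : Prop :=
  3 ≤ D.verts.card ∧
    ∀ v ∈ D.verts, ∀ l : ℕ, 3 ≤ l → l ≤ D.verts.card → D.HasCycleThrough l v

/-- `D` is a generalized sum of the two vertex-disjoint digraphs `D1` and `D2`:
its vertex set is the union of theirs, it induces each of them, and between any two
vertices of different summands there is exactly one arc. -/
def GenSum2 (D1 D2 D : FinDigraph α) : Prop :=
  D.verts = D1.verts ∪ D2.verts ∧
  (∀ u v : α, u ∈ D1.verts → v ∈ D1.verts → (D.Arc u v ↔ D1.Arc u v)) ∧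
  (∀ u v : α, u ∈ D2.verts → v ∈ D2.verts → (D.Arc u v ↔ D2.Arc u v)) ∧
  (∀ u v : α, u ∈ D1.verts → v ∈ D2.verts → Xor' (D.Arc u v) (D.Arc v u))

/-- `D` is a generalized sum of the pairwise vertex-disjoint digraphs `Ds i`. -/
def GenSum {k : ℕ} (Ds : Fin k → FinDigraph α) (D : FinDigraph α) : Prop :=
  D.verts = Finset.univ.biUnion (fun i => (Ds i).verts) ∧
  (∀ i : Fin k, ∀ u v : α, u ∈ (Ds i).verts → v ∈ (Ds i).verts →
    (D.Arc u v ↔ (Ds i).Arc u v)) ∧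
  (∀ i j : Fin k, i ≠ j → ∀ u v : α, u ∈ (Ds i).verts → v ∈ (Ds j).verts →
    Xor' (D.Arc u v) (D.Arc v u))

end FinDigraph

open FinDigraph

namespace FinDigraph

variable {α : Type} [DecidableEq α]

/-! ### Cycles of `D` built from the two Hamiltonian cycles -/

theorem hasCycle_of_nat (D : FinDigraph α) (l : ℕ) (hl : 1 ≤ l) (g : ℕ → α)
    (hinj : ∀ i j, i < j → j < l → g i ≠ g j)
    (harc : ∀ i, i + 1 < l → D.Arc (g i) (g (i + 1)))
    (hlast : D.Arc (g (l - 1)) (g 0)) : D.HasCycle l := by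
  obtain ⟨k, rfl⟩ : ∃ k, l = k + 1 := ⟨l - 1, by omega⟩
  refine ⟨fun i => g (ZMod.val i), ?_, ?_⟩
  · intro a b hab
    have ha := ZMod.val_lt a
    have hb := ZMod.val_lt b
    apply ZMod.val_injective (k + 1)
    rcases lt_trichotomy a.val b.val with h | h | h
    · exact absurd hab (hinj _ _ h hb)
    · exact h
    · exact absurd hab.symm (hinj _ _ h ha)
  · intro i
    have hi := ZMod.val_lt i
    have hv : (i + 1).val = (i.val + 1) % (k + 1) := by
      rw [ZMod.val_add, ZMod.val_one_eq_one_mod, Nat.add_mod_mod]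
    simp only [hv]
    by_cases h : i.val + 1 < k + 1
    · rw [Nat.mod_eq_of_lt h]
      exact harc _ h
    · have h' : i.val = k := by omega
      rw [h', Nat.mod_self]
      simpa using hlast

/-- A Hamiltonian cycle, unrolled to a periodic sequence indexed by `ℤ`. -/
theorem Hamiltonian.unroll {D : FinDigraph α} (h : D.Hamiltonian) :
    2 ≤ D.verts.card ∧ ∃ X : ℤ → α,
      (∀ i j, X i = X j ↔ (D.verts.card : ℤ) ∣ j - i) ∧
      (∀ i, D.Arc (X i) (X (i + 1))) ∧ (∀ i, X i ∈ D.verts) ∧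
      ∀ v ∈ D.verts, ∃ i, X i = v := by
  obtain ⟨c, ⟨hinj, harc⟩, hsurj⟩ := h
  have hX : ∀ i j : ℤ, c (i : ZMod D.verts.card) = c (j : ZMod D.verts.card) ↔
      (D.verts.card : ℤ) ∣ j - i := by
    intro i j
    rw [hinj.eq_iff, ZMod.intCast_eq_intCast_iff_dvd_sub]
  refine ⟨?_, fun i => c (i : ZMod _), hX, ?_, ?_, ?_⟩
  · by_contra hlt
    have hcases : D.verts.card = 0 ∨ D.verts.card = 1 := by omega
    rcases hcases with h0 | h1
    · have := D.arc_mem_left (harc 0)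
      rw [Finset.card_eq_zero] at h0
      simp [h0] at this
    · have h01 : c ((0 : ℤ) : ZMod D.verts.card) = c ((1 : ℤ) : ZMod D.verts.card) := by
        rw [hX, h1]
        norm_num
      have := harc 0
      simp only [Int.cast_zero, Int.cast_one] at h01
      rw [zero_add, ← h01] at this
      exact D.arc_irrefl _ this
  · intro i
    have := harc (i : ZMod _)
    push_cast
    exact this
  · intro i
    exact D.arc_mem_left (harc _)
  · intro v hv
    obtain ⟨i, hi⟩ := hsurj v hv
    obtain ⟨z, rfl⟩ := ZMod.intCast_surjective i
    exact ⟨z, hi⟩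

/-- A path along the first cycle followed by a path along the second one. -/
theorem hasCycle_of_two_segments (D : FinDigraph α) (n m : ℕ) (X Y : ℤ → α)
    (hX : ∀ i j, X i = X j ↔ (n : ℤ) ∣ j - i) (hY : ∀ i j, Y i = Y j ↔ (m : ℤ) ∣ j - i)
    (hXY : ∀ i j, X i ≠ Y j)
    (hXa : ∀ i, D.Arc (X i) (X (i + 1))) (hYa : ∀ i, D.Arc (Y i) (Y (i + 1)))
    (p q : ℤ) (s t : ℕ) (hs : s < n) (ht : t < m)
    (h1 : D.Arc (Y q) (X p)) (h2 : D.Arc (X (p + s)) (Y (q - t))) :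
    D.HasCycle (s + t + 2) := by
  have hXne : ∀ i j : ℤ, i < j → j - i < n → X i ≠ X j := by
    intro i j hij hlt h
    have := Int.le_of_dvd (by omega) ((hX i j).1 h)
    omega
  have hYne : ∀ i j : ℤ, i < j → j - i < m → Y i ≠ Y j := by
    intro i j hij hlt h
    have := Int.le_of_dvd (by omega) ((hY i j).1 h)
    omega
  apply hasCycle_of_nat D _ (by omega)
    (fun k => if k ≤ s then X (p + k) else Y (q - t + (k - s - 1)))
  · intro i j hij hj
    split_ifs
    · exact hXne _ _ (by omega) (by omega)
    · exact hXY _ _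
    · omega
    · exact hYne _ _ (by omega) (by omega)
  · intro i hi
    split_ifs
    · convert hXa (p + i) using 2
      push_cast
      ring
    · obtain rfl : i = s := by omega
      convert h2 using 2
      push_cast
      ring
    · omega
    · convert hYa (q - t + (i - s - 1)) using 2
      push_cast
      ring
  · rw [if_neg (by omega), if_pos (by omega)]
    convert h1 using 2
    · push_cast [show 1 ≤ s + t + 2 by omega]
      omega
    · simp

/-- If the cross arcs alternate with the parity of `i + j`, the cycle
`X p, …, X (p + a), Y (q - b - 1), X (p + a + 1), Y (q - b), …, Y q`, which changes sides four
times, has length `a + b + 4`. -/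
theorem hasCycle_of_parity (D : FinDigraph α) (n m : ℕ) (X Y : ℤ → α)
    (hX : ∀ i j, X i = X j ↔ (n : ℤ) ∣ j - i) (hY : ∀ i j, Y i = Y j ↔ (m : ℤ) ∣ j - i)
    (hXY : ∀ i j, X i ≠ Y j)
    (hXa : ∀ i, D.Arc (X i) (X (i + 1))) (hYa : ∀ i, D.Arc (Y i) (Y (i + 1)))
    (p q : ℤ) (a b : ℕ) (ha : a + 2 ≤ n) (hb : b + 2 ≤ m) (hab : Even (a + b))
    (heven : ∀ u v : ℤ, Even (u + v) → D.Arc (Y (q + v)) (X (p + u)))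
    (hodd : ∀ u v : ℤ, Odd (u + v) → D.Arc (X (p + u)) (Y (q + v))) :
    D.HasCycle (a + b + 4) := by
  have hXne : ∀ i j : ℤ, i < j → j - i < n → X i ≠ X j := by
    intro i j hij hlt h
    have := Int.le_of_dvd (by omega) ((hX i j).1 h)
    omega
  have hYne : ∀ i j : ℤ, i < j → j - i < m → Y i ≠ Y j := by
    intro i j hij hlt h
    have := Int.le_of_dvd (by omega) ((hY i j).1 h)
    omega
  obtain ⟨r, hr⟩ := hab
  apply hasCycle_of_nat D _ (by omega)
    (fun k => if k ≤ a then X (p + k) else if k = a + 1 then Y (q + (-b - 1))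
      else if k = a + 2 then X (p + (a + 1)) else Y (q + (k - a - b - 3)))
  · intro i j hij hj
    split_ifs
    all_goals first
      | omega
      | exact hXne _ _ (by omega) (by omega)
      | exact hYne _ _ (by omega) (by omega)
      | exact hXY _ _
      | exact (hXY _ _).symm
  · intro i hi
    by_cases h1 : i + 1 ≤ a
    · rw [if_pos (by omega), if_pos h1]
      convert hXa (p + i) using 2
      push_cast
      ring
    by_cases h2 : i = a
    · subst h2
      rw [if_pos le_rfl, if_neg (by omega), if_pos rfl]
      exact hodd _ _ ⟨r - b - 1, by omega⟩
    by_cases h3 : i = a + 1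
    · subst h3
      rw [if_neg (by omega), if_pos rfl, if_neg (by omega), if_neg (by omega), if_pos rfl]
      exact heven _ _ ⟨r - b, by omega⟩
    by_cases h4 : i = a + 2
    · subst h4
      rw [if_neg (by omega), if_neg (by omega), if_pos rfl, if_neg (by omega), if_neg (by omega),
        if_neg (by omega)]
      exact hodd _ _ ⟨r - b, by omega⟩
    · rw [if_neg (by omega), if_neg (by omega), if_neg (by omega), if_neg (by omega),
        if_neg (by omega), if_neg (by omega)]
      convert hYa (q + (i - a - b - 3)) using 2
      push_cast
      ring
  · rw [if_neg (by omega), if_neg (by omega), if_neg (by omega), if_pos (by omega)]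
    exact heven _ _ ⟨0, by omega⟩

end FinDigraph

/-! ### Shift-invariant relations on `ℤ` -/

/-- The group of integer shifts leaving the binary relation `F` on `ℤ` invariant. -/
def shiftStabilizer (F : ℤ → ℤ → Prop) : AddSubgroup (ℤ × ℤ) where
  carrier := {h | ∀ i j, F (i + h.1) (j + h.2) ↔ F i j}
  zero_mem' := by simp
  add_mem' := by
    intro a b ha hb i j
    rw [← ha i j, ← hb (i + a.1) (j + a.2)]
    simp only [Prod.fst_add, Prod.snd_add, add_assoc]
  neg_mem' := by
    intro a ha i j
    have := ha (i + -a.1) (j + -a.2)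
    simp only [neg_add_cancel_right] at this
    exact this.symm

/-- For a doubly periodic relation, invariance under a shift in one direction suffices: iterating
the shift `n * m` times gives the identity. -/
theorem mem_shiftStabilizer_of_imp (F : ℤ → ℤ → Prop) (n m : ℕ) (hn : 0 < n) (hm : 0 < m)
    (h1 : ((n : ℤ), (0 : ℤ)) ∈ shiftStabilizer F) (h2 : ((0 : ℤ), (m : ℤ)) ∈ shiftStabilizer F)
    (h : ℤ × ℤ) (himp : ∀ i j, F i j → F (i + h.1) (j + h.2)) : h ∈ shiftStabilizer F := by
  have hiter : ∀ (k : ℕ) (i j : ℤ), F i j → F (i + k * h.1) (j + k * h.2) := by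
    intro k
    induction k with
    | zero => simp
    | succ k ih =>
      intro i j hij
      convert himp _ _ (ih i j hij) using 1 <;> push_cast <;> ring
  have hper : (((n * m : ℕ) : ℤ) * h.1, ((n * m : ℕ) : ℤ) * h.2) ∈ shiftStabilizer F := by
    have := add_mem (zsmul_mem h1 (m * h.1)) (zsmul_mem h2 (n * h.2))
    convert this using 1
    ext <;> simp <;> ring
  intro i j
  refine ⟨fun hij => ?_, himp i j⟩
  have hpos : 1 ≤ n * m := Nat.mul_pos hn hm
  have := hiter (n * m - 1) _ _ hij
  rw [← hper i j]
  convert this using 1 <;> push_cast [hpos] <;> ring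

/-! ### Pancyclicity -/

theorem stmt_7 {α : Type} [DecidableEq α]
    (D1 D2 D : FinDigraph α) (n m d : ℕ)
    (hn : n = D1.verts.card) (hm : m = D2.verts.card) (hmn : m ≤ n)
    (hd : d = Nat.gcd n m) (hd12 : d = 1 ∨ d = 2)
    (hdisj : Disjoint D1.verts D2.verts)
    (h1 : D1.Hamiltonian) (h2 : D2.Hamiltonian)
    (hD : GenSum2 D1 D2 D) (hstrong : D.Strong) :
    D.Pancyclic := by
  obtain ⟨hn2, X, hX, hXa, hXm, hXs⟩ := h1.unroll
  obtain ⟨hm2, Y, hY, hYa, hYm, hYs⟩ := h2.unroll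
  rw [← hn] at hn2 hX
  rw [← hm] at hm2 hY
  obtain ⟨hV, hD1, hD2, hcross⟩ := hD
  have hcard : D.verts.card = n + m := by
    rw [hV, Finset.card_union_of_disjoint hdisj, hn, hm]
  have hXY : ∀ i j, X i ≠ Y j := fun i j h =>
    Finset.disjoint_left.1 hdisj (hXm i) (h ▸ hYm j)
  replace hXa : ∀ i, D.Arc (X i) (X (i + 1)) := fun i => (hD1 _ _ (hXm _) (hXm _)).2 (hXa i)
  replace hYa : ∀ i, D.Arc (Y i) (Y (i + 1)) := fun i => (hD2 _ _ (hYm _) (hYm _)).2 (hYa i)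
  set F : ℤ → ℤ → Prop := fun i j => D.Arc (Y j) (X i) with hF
  have hnF : ∀ i j, ¬ F i j → D.Arc (X i) (Y j) := by
    intro i j h
    rcases hcross _ _ (hXm i) (hYm j) with h' | h'
    · exact h'.1
    · exact absurd h'.1 h
  have hFn : ∀ i j, F i j → ¬ D.Arc (X i) (Y j) := by
    intro i j h
    rcases hcross _ _ (hXm i) (hYm j) with h' | h'
    · exact absurd h h'.2
    · exact h'.2
  have hnotall : ¬ ∀ i j, F i j := by
    intro hall
    -- The first summand is closed under out-neighbours.
    have key : ∀ v, Relation.ReflTransGen D.Arc (X 0) v → v ∈ D1.verts := by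
      intro v hv
      induction hv with
      | refl => exact hXm 0
      | tail _ harc ih =>
        have hmem := D.arc_mem_right harc
        rw [hV, Finset.mem_union] at hmem
        rcases hmem with h | h
        · exact h
        · obtain ⟨i, rfl⟩ := hXs _ ih
          obtain ⟨j, rfl⟩ := hYs _ h
          exact absurd harc (hFn i j (hall i j))
    have := key (Y 0) (hstrong _ (by simp [hV, hXm]) _ (by simp [hV, hYm]))
    exact Finset.disjoint_left.1 hdisj this (hYm 0)
  have hnotnone : ¬ ∀ i j, ¬ F i j := by
    intro hall
    -- The second summand is closed under out-neighbours.
    have key : ∀ v, Relation.ReflTransGen D.Arc (Y 0) v → v ∈ D2.verts := by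
      intro v hv
      induction hv with
      | refl => exact hYm 0
      | tail _ harc ih =>
        have hmem := D.arc_mem_right harc
        rw [hV, Finset.mem_union] at hmem
        rcases hmem with h | h
        · obtain ⟨j, rfl⟩ := hYs _ ih
          obtain ⟨i, rfl⟩ := hXs _ h
          exact absurd harc (hall i j)
        · exact h
    have := key (X 0) (hstrong _ (by simp [hV, hYm]) _ (by simp [hV, hXm]))
    exact Finset.disjoint_left.1 hdisj (hXm 0) this
  have hper1 : ((n : ℤ), (0 : ℤ)) ∈ shiftStabilizer F := by
    intro i j
    have : X (i + n) = X i := (hX _ _).2 ⟨-1, by ring⟩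
    simp only [hF, add_zero, this]
  have hper2 : ((0 : ℤ), (m : ℤ)) ∈ shiftStabilizer F := by
    intro i j
    have : Y (j + m) = Y j := (hY _ _).2 ⟨-1, by ring⟩
    simp only [hF, add_zero, this]
  refine ⟨by omega, fun l hl3 hl => ?_⟩
  rw [hcard] at hl
  by_contra hno
  have hshift : ∀ s t : ℕ, s < n → t < m → s + t + 2 = l →
      ((s : ℤ), -(t : ℤ)) ∈ shiftStabilizer F := by
    intro s t hs ht hst
    apply mem_shiftStabilizer_of_imp F n m (by omega) (by omega) hper1 hper2
    intro i j hij
    by_contra hne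
    exact hno (hst ▸ hasCycle_of_two_segments D n m X Y hX hY hXY hXa hYa i j s t hs ht hij
      (hnF _ _ hne))
  have hdiag : ((1 : ℤ), (1 : ℤ)) ∈ shiftStabilizer F ∨
      ((1 : ℤ), (-1 : ℤ)) ∈ shiftStabilizer F := by
    by_cases hlt : l < n + m
    · left
      obtain ⟨s, t, hs, ht, hst⟩ : ∃ s t : ℕ, s + 1 < n ∧ t + 1 < m ∧ s + (t + 1) + 2 = l := by
        refine ⟨min (n - 2) (l - 3), l - 3 - min (n - 2) (l - 3), ?_, ?_, ?_⟩ <;> omega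
      have := sub_mem (hshift (s + 1) t hs (by omega) (by omega))
        (hshift s (t + 1) (by omega) ht hst)
      convert this using 1
      ext <;> simp
    · right
      have := add_mem (neg_mem (hshift (n - 1) (m - 1) (by omega) (by omega) (by omega)))
        (sub_mem hper1 hper2)
      convert this using 1
      ext <;> push_cast [show 1 ≤ n by omega, show 1 ≤ m by omega] <;> simp <;> ring
  -- By Bézout `(d, 0)` is a combination of the diagonal shift and the two periods.
  have hd0 : ((d : ℤ), (0 : ℤ)) ∈ shiftStabilizer F := by
    have hbez : (d : ℤ) = n * Nat.gcdA n m + m * Nat.gcdB n m := by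
      rw [hd, Nat.gcd_eq_gcd_ab]
    rcases hdiag with h | h
    · have := add_mem (zsmul_mem hper1 (Nat.gcdA n m))
        (sub_mem (zsmul_mem h (m * Nat.gcdB n m)) (zsmul_mem hper2 (Nat.gcdB n m)))
      convert this using 1
      ext
      · simp [hbez]; ring
      · simp; ring
    · have := add_mem (zsmul_mem hper1 (Nat.gcdA n m))
        (add_mem (zsmul_mem h (m * Nat.gcdB n m)) (zsmul_mem hper2 (Nat.gcdB n m)))
      convert this using 1
      ext
      · simp [hbez]; ring
      · simp; ring
  have h20 : ((2 : ℤ), (0 : ℤ)) ∈ shiftStabilizer F := by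
    rcases hd12 with h | h
    · rw [h] at hd0
      simpa using zsmul_mem hd0 2
    · rw [h] at hd0
      exact hd0
  have h11 : ((1 : ℤ), (1 : ℤ)) ∈ shiftStabilizer F := by
    rcases hdiag with h | h
    · exact h
    · simpa using sub_mem h20 h
  have heven : ∀ u v : ℤ, Even (u + v) → (u, v) ∈ shiftStabilizer F := by
    rintro u v ⟨k, hk⟩
    have := add_mem (zsmul_mem h11 v) (zsmul_mem h20 (k - v))
    convert this using 1
    ext
    · simp; omega
    · simp
  have h10 : ((1 : ℤ), (0 : ℤ)) ∉ shiftStabilizer F := by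
    intro h10
    have hconst : ∀ i j, F i j ↔ F 0 0 := by
      intro i j
      have := add_mem (zsmul_mem h11 j) (zsmul_mem h10 (i - j))
      have := this 0 0
      simpa using this
    by_cases h0 : F 0 0
    · exact hnotall fun i j => (hconst i j).2 h0
    · exact hnotnone fun i j h => h0 ((hconst i j).1 h)
  have hleven : Even l := by
    by_contra hodd
    rw [Nat.not_even_iff_odd] at hodd
    obtain ⟨k, hk⟩ := hodd
    obtain ⟨s, t, hs, ht, hst⟩ : ∃ s t : ℕ, s < n ∧ t < m ∧ s + t + 2 = l := by
      refine ⟨min (n - 1) (l - 2), l - 2 - min (n - 1) (l - 2), ?_, ?_, ?_⟩ <;> omega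
    have := add_mem (hshift s t hs ht hst) (heven (1 - s) t ⟨1 - k + t, by omega⟩)
    exact h10 (by simpa using this)
  -- If `F` never changed from true to false along `(1, 0)`, periodicity would make it invariant.
  obtain ⟨p, q, hp, hp1⟩ : ∃ p q, F p q ∧ ¬ F (p + 1) q := by
    by_contra hcon
    push Not at hcon
    exact h10 (mem_shiftStabilizer_of_imp F n m (by omega) (by omega) hper1 hper2 _
      fun i j hij => by simpa using hcon i j hij)
  obtain ⟨r, hr⟩ := hleven
  obtain ⟨a, b, ha, hb, hab⟩ : ∃ a b : ℕ, a + 2 ≤ n ∧ b + 2 ≤ m ∧ a + b + 4 = l := by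
    refine ⟨min (n - 2) (l - 4), l - 4 - min (n - 2) (l - 4), ?_, ?_, ?_⟩ <;> omega
  refine hno (hab ▸ hasCycle_of_parity D n m X Y hX hY hXY hXa hYa p q a b ha hb
    ⟨r - 2, by omega⟩ ?_ ?_)
  · intro u v huv
    exact (heven u v huv p q).2 hp
  · rintro u v ⟨k, hk⟩
    apply hnF
    intro h
    apply hp1
    rw [← heven (u - 1) v ⟨k, by omega⟩ (p + 1) q]
    convert h using 1
    ring
end

section
/- Let D_1 and D_2 be two vertex-disjoint Hamiltonian digraphs and let D ∈ D_1 ⊕ D_2. If D is strong, then D is Hamiltonian. -/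
open FinDigraph

namespace FinDigraph

variable {α : Type}

/-- The `k` consecutive entries `c i, c (i+1), …, c (i+k-1)` of a cyclic sequence. -/
def seg {n : ℕ} (c : ZMod n → α) (i : ZMod n) (k : ℕ) : List α :=
  (List.range k).map fun t : ℕ => c (i + (t : ZMod n))

lemma seg_add {n : ℕ} (c : ZMod n → α) (i : ZMod n) (k l : ℕ) :
    seg c i (k + l) = seg c i k ++ seg c (i + k) l := by
  simp [seg, List.range_add, Function.comp_def, add_assoc]

lemma seg_one {n : ℕ} (c : ZMod n → α) (i : ZMod n) : seg c i 1 = [c i] := by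
  simp [seg]

lemma head_seg {n : ℕ} (c : ZMod n → α) (i : ZMod n) {k : ℕ} (hk : 0 < k) :
    (seg c i k).head? = some (c i) := by
  obtain ⟨k, rfl⟩ := Nat.exists_eq_add_of_lt hk
  simp [seg, List.range_succ_eq_map]

lemma getLast_seg {n : ℕ} (c : ZMod n → α) (i j : ZMod n) {k : ℕ} (hk : 0 < k)
    (hj : i + k = j + 1) : (seg c i k).getLast? = some (c j) := by
  obtain ⟨k, rfl⟩ := Nat.exists_eq_add_of_lt hk
  have : j = i + k := by
    push_cast at hj
    linear_combination -hj
  simp [seg, List.range_succ, this]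

lemma isChain_seg {n : ℕ} {R : α → α → Prop} {c : ZMod n → α} (hc : ∀ i, R (c i) (c (i + 1)))
    (i : ZMod n) (k : ℕ) : (seg c i k).IsChain R := by
  induction k with
  | zero => simp [seg]
  | succ k ih =>
    rw [seg_add, seg_one, List.isChain_append]
    refine ⟨ih, by simp, ?_⟩
    rcases Nat.eq_zero_or_pos k with rfl | hk
    · simp [seg]
    · rw [getLast_seg c i (i + k - 1) hk (by ring)]
      have := hc (i + k - 1)
      simpa using this

lemma nodup_seg {n : ℕ} {c : ZMod n → α} (hc : Function.Injective c) (i : ZMod n) :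
    (seg c i n).Nodup := by
  refine List.Nodup.map_on ?_ List.nodup_range
  intro a ha b hb h
  have h' := add_left_cancel (hc h)
  rw [List.mem_range] at ha hb
  rw [ZMod.natCast_eq_natCast_iff'] at h'
  rwa [Nat.mod_eq_of_lt ha, Nat.mod_eq_of_lt hb] at h'

lemma mem_seg {n : ℕ} [NeZero n] {c : ZMod n → α} (i j : ZMod n) : c j ∈ seg c i n := by
  refine List.mem_map.2 ⟨(j - i).val, List.mem_range.2 (ZMod.val_lt _), ?_⟩
  simp

lemma two_le_card [DecidableEq α] {D : FinDigraph α} (h : D.Hamiltonian) : 2 ≤ D.verts.card := by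
  obtain ⟨c, ⟨-, ha⟩, -⟩ := h
  by_contra! hlt
  have h01 : D.verts.card = 0 ∨ D.verts.card = 1 := by omega
  rcases h01 with h0 | h1
  · have hmem : ∀ w, w ∉ D.verts := fun w hw => by simp [Finset.card_eq_zero.1 h0] at hw
    exact hmem _ (D.arc_mem_left (ha 0))
  · obtain ⟨v, hv⟩ := Finset.card_eq_one.1 h1
    have hmem : ∀ w ∈ D.verts, w = v := fun w hw => by simpa [hv] using hw
    have hl := hmem _ (D.arc_mem_left (ha 0))
    have hr := hmem _ (D.arc_mem_right (ha 0))
    have h := ha 0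
    rw [hl, hr] at h
    exact D.arc_irrefl v h

/-- A closed duplicate-free list of all vertices, consecutive ones being joined by arcs, is a
Hamiltonian cycle. -/
lemma hamiltonian_of_list [DecidableEq α] {D : FinDigraph α} (l : List α) (hnd : l.Nodup)
    (hmem : ∀ v, v ∈ l ↔ v ∈ D.verts) (hne : l ≠ []) (hch : l.IsChain D.Arc)
    (hcl : ∀ a ∈ l.getLast?, ∀ b ∈ l.head?, D.Arc a b) : D.Hamiltonian := by
  have hlen : l.length = D.verts.card := by
    rw [← List.toFinset_card_of_nodup hnd]
    congr 1
    ext v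
    simp [hmem]
  unfold Hamiltonian
  rw [← hlen]
  have hpos : 0 < l.length := List.length_pos_iff.2 hne
  have : NeZero l.length := ⟨hpos.ne'⟩
  refine ⟨fun i => l[i.val]'(ZMod.val_lt i), ⟨?_, ?_⟩, ?_⟩
  · intro i j h
    exact ZMod.val_injective _ ((hnd.getElem_inj_iff).1 h)
  · intro i
    have hi := ZMod.val_lt i
    have hv : (i + 1).val = (i.val + 1) % l.length := by
      rw [ZMod.val_add, ZMod.val_one_eq_one_mod, Nat.add_mod_mod]
    simp only [hv]
    rcases Nat.lt_or_ge (i.val + 1) l.length with hlt | hge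
    · simp only [Nat.mod_eq_of_lt hlt]
      exact List.isChain_iff_getElem.1 hch i.val hlt
    · have he : i.val + 1 = l.length := by omega
      have hi' : i.val = l.length - 1 := by omega
      simp only [hi', Nat.sub_add_cancel hpos, Nat.mod_self]
      apply hcl
      · rw [List.getLast?_eq_getElem?]
        simp [hpos]
      · rw [List.head?_eq_getElem?]
        simp [hpos]
  · intro v hv
    obtain ⟨k, hk, rfl⟩ := List.getElem_of_mem ((hmem v).2 hv)
    exact ⟨(k : ZMod l.length), by simp [ZMod.val_natCast, Nat.mod_eq_of_lt hk]⟩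

lemma exists_step_of_ne {m : ℕ} [NeZero m] {P : ZMod m → Prop} {a b : ZMod m} (ha : P a)
    (hb : ¬ P b) : ∃ j, P j ∧ ¬ P (j + 1) := by
  by_contra! h
  have key : ∀ k : ℕ, P (a + k) := by
    intro k
    induction k with
    | zero => simpa using ha
    | succ k ih => simpa [add_assoc] using h _ ih
  apply hb
  simpa using key (b - a).val

/-- A relation on a finite torus that is preserved by `(i, j + 1) ↦ (i + 1, j)` is also preserved
by the inverse, which is an iterate of that map. -/
lemma antidiagonal_iff {n m : ℕ} [NeZero n] [NeZero m] {f : ZMod n → ZMod m → Prop}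
    (h : ∀ i j, f i (j + 1) → f (i + 1) j) (i : ZMod n) (j : ZMod m) :
    f i (j + 1) ↔ f (i + 1) j := by
  refine ⟨h i j, fun hf => ?_⟩
  have key : ∀ k : ℕ, f (i + 1 + k) (j - k) := by
    intro k
    induction k with
    | zero => simpa using hf
    | succ k ih =>
      have := h (i + 1 + k) (j - k - 1) (by simpa using ih)
      push_cast
      rwa [← add_assoc, ← sub_sub]
  have hpos : 1 ≤ n * m := Nat.mul_pos (NeZero.pos n) (NeZero.pos m)
  -- The map has order dividing `n * m`, so its `(n * m - 1)`-th iterate is its inverse.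
  have := key (n * m - 1)
  rw [Nat.cast_sub hpos, Nat.cast_sub hpos] at this
  simpa using this

end FinDigraph

theorem stmt_8 {α : Type} [DecidableEq α]
    (D1 D2 D : FinDigraph α)
    (hdisj : Disjoint D1.verts D2.verts)
    (h1 : D1.Hamiltonian) (h2 : D2.Hamiltonian)
    (hD : GenSum2 D1 D2 D) (hstrong : D.Strong) :
    D.Hamiltonian := by
  have hn := two_le_card h1
  have hm := two_le_card h2
  obtain ⟨x, ⟨hxi, hxa⟩, hxs⟩ := h1
  obtain ⟨y, ⟨hyi, hya⟩, hys⟩ := h2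
  obtain ⟨hV, hA1, hA2, hX⟩ := hD
  have hxm : ∀ i, x i ∈ D1.verts := fun i => D1.arc_mem_left (hxa i)
  have hym : ∀ i, y i ∈ D2.verts := fun i => D2.arc_mem_left (hya i)
  generalize D1.verts.card = n at *
  generalize D2.verts.card = m at *
  have : NeZero n := ⟨by omega⟩
  have : NeZero m := ⟨by omega⟩
  replace hxa : ∀ i, D.Arc (x i) (x (i + 1)) := fun i => (hA1 _ _ (hxm _) (hxm _)).2 (hxa i)
  replace hya : ∀ i, D.Arc (y i) (y (i + 1)) := fun i => (hA2 _ _ (hym _) (hym _)).2 (hya i)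
  have hnot : ∀ i j, ¬ D.Arc (x i) (y j) ↔ D.Arc (y j) (x i) := by
    intro i j
    have := (xor_iff_not_iff _ _).1 (hX _ _ (hxm i) (hym j))
    tauto
  -- Any closed rearrangement of the two vertex cycles is a Hamiltonian cycle.
  have build : ∀ (l : List α) (i : ZMod n) (j : ZMod m), l.Perm (seg x i n ++ seg y j m) →
      l.IsChain D.Arc → (∀ a ∈ l.getLast?, ∀ b ∈ l.head?, D.Arc a b) → D.Hamiltonian := by
    intro l i j hp hch hcl
    refine hamiltonian_of_list l ?_ ?_ ?_ hch hcl
    · rw [hp.nodup_iff, List.nodup_append']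
      refine ⟨nodup_seg hxi i, nodup_seg hyi j, ?_⟩
      intro v hv hv'
      obtain ⟨a, -, rfl⟩ := List.mem_map.1 hv
      obtain ⟨b, -, hb⟩ := List.mem_map.1 hv'
      exact Finset.disjoint_left.1 hdisj (hxm _) (hb ▸ hym _)
    · intro v
      rw [hp.mem_iff, List.mem_append, hV, Finset.mem_union]
      constructor
      · rintro (hv | hv)
        · obtain ⟨a, -, rfl⟩ := List.mem_map.1 hv
          exact Or.inl (hxm _)
        · obtain ⟨a, -, rfl⟩ := List.mem_map.1 hv
          exact Or.inr (hym _)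
      · rintro (hv | hv)
        · obtain ⟨a, rfl⟩ := hxs v hv
          exact Or.inl (mem_seg i a)
        · obtain ⟨a, rfl⟩ := hys v hv
          exact Or.inr (mem_seg j a)
    · rintro rfl
      have := (hp.mem_iff (a := x i)).2 (List.mem_append_left _ (mem_seg i i))
      simp at this
  by_cases hgood : ∃ i j, D.Arc (x i) (y (j + 1)) ∧ D.Arc (y j) (x (i + 1))
  · obtain ⟨i, j, hij, hji⟩ := hgood
    refine build (seg x (i + 1) n ++ seg y (j + 1) m) _ _ (List.Perm.refl _) ?_ ?_
    · rw [List.isChain_append]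
      refine ⟨isChain_seg hxa _ _, isChain_seg hya _ _, ?_⟩
      rw [getLast_seg x _ i (by omega) (by simp), head_seg y _ (by omega)]
      simpa using hij
    · rw [List.getLast?_append, List.head?_append, getLast_seg y _ j (by omega) (by simp),
        head_seg x _ (by omega)]
      simpa using hji
  have hinv := antidiagonal_iff (f := fun i j => D.Arc (x i) (y j)) (by
    intro i j hij
    by_contra hc
    exact hgood ⟨i, j, hij, (hnot _ _).1 hc⟩)
  have hrow : ∃ i a b, D.Arc (x i) (y a) ∧ ¬ D.Arc (x i) (y b) := by
    by_contra! hrow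
    have hconst : ∀ i j, D.Arc (x i) (y j) ↔ D.Arc (x 0) (y 0) := by
      have hstep : ∀ i, D.Arc (x i) (y 0) ↔ D.Arc (x (i + 1)) (y 0) := fun i =>
        ⟨fun h => (hinv i 0).1 (hrow _ _ _ h), fun h => hrow _ _ _ ((hinv i 0).2 h)⟩
      have hnat : ∀ k : ℕ, D.Arc (x k) (y 0) ↔ D.Arc (x 0) (y 0) := by
        intro k
        induction k with
        | zero => simp
        | succ k ih => rw [← ih, hstep k, Nat.cast_succ]
      intro i j
      rw [← hnat i.val, ZMod.natCast_zmod_val]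
      exact ⟨hrow _ _ _, hrow _ _ _⟩
    have hx0 : x 0 ∈ D.verts := by simp [hV, hxm]
    have hy0 : y 0 ∈ D.verts := by simp [hV, hym]
    -- If all arcs between the summands point the same way, no path leads back.
    by_cases h0 : D.Arc (x 0) (y 0)
    · have : ∀ v, Relation.ReflTransGen D.Arc (y 0) v → v ∈ D2.verts := by
        intro v hv
        induction hv with
        | refl => exact hym 0
        | tail _ hbc ih =>
          rename_i b c _
          have hc := D.arc_mem_right hbc
          rw [hV, Finset.mem_union] at hc
          refine hc.resolve_left fun hc1 => ?_
          obtain ⟨i, rfl⟩ := hxs _ hc1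
          obtain ⟨j, rfl⟩ := hys _ ih
          exact (hnot i j).2 hbc ((hconst i j).2 h0)
      exact Finset.disjoint_left.1 hdisj (hxm 0) (this _ (hstrong _ hy0 _ hx0))
    · have : ∀ v, Relation.ReflTransGen D.Arc (x 0) v → v ∈ D1.verts := by
        intro v hv
        induction hv with
        | refl => exact hxm 0
        | tail _ hbc ih =>
          rename_i b c _
          have hc := D.arc_mem_right hbc
          rw [hV, Finset.mem_union] at hc
          refine hc.resolve_right fun hc1 => ?_
          obtain ⟨j, rfl⟩ := hys _ hc1
          obtain ⟨i, rfl⟩ := hxs _ ih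
          exact h0 ((hconst i j).1 hbc)
      exact Finset.disjoint_left.1 hdisj (this _ (hstrong _ hx0 _ hy0)) (hym 0)
  obtain ⟨i, a, b, ha, hb⟩ := hrow
  obtain ⟨q, rfl⟩ : ∃ q, i = q + 1 := ⟨i - 1, by ring⟩
  obtain ⟨p, hp, hp'⟩ := exists_step_of_ne (P := fun j => D.Arc (x (q + 1)) (y j)) ha hb
  obtain ⟨s, hs, hs'⟩ := exists_step_of_ne (P := fun j => ¬ D.Arc (x (q + 1)) (y j)) hb
    (not_not.2 ha)
  -- Here `p + 1` is the index `r` of the outline, and `(s - p).val` is the length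
  -- of `y r ⋯ y s`.
  have hps : s - p ≠ 0 := by
    intro h
    rw [sub_eq_zero] at h
    exact hs (h ▸ hp)
  have hkpos : 0 < (s - p).val := Nat.pos_of_ne_zero fun h => hps ((ZMod.val_eq_zero _).1 h)
  have hklt : (s - p).val < m := ZMod.val_lt _
  have hkc : (((s - p).val : ℕ) : ZMod m) = s - p := by simp
  generalize (s - p).val = k at *
  have e1 : D.Arc (x q) (y (p + 1)) := (hinv q p).2 hp
  have e2 : D.Arc (y s) (x (q + 1)) := (hnot _ _).1 hs
  have e3 : D.Arc (x (q + 1)) (y (s + 1)) := not_not.1 hs'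
  have e4 : D.Arc (y p) (x (q + 1 + 1)) := (hnot _ _).1 fun h => hp' ((hinv _ _).2 h)
  have hxl : seg x (q + 1) n = [x (q + 1)] ++ seg x (q + 1 + 1) (n - 1) := by
    have := seg_add x (q + 1) 1 (n - 1)
    rwa [seg_one, Nat.cast_one, Nat.add_sub_cancel' (by omega)] at this
  have hyl : seg y (p + 1) m = seg y (p + 1) k ++ seg y (s + 1) (m - k) := by
    have := seg_add y (p + 1) k (m - k)
    rwa [Nat.add_sub_cancel' hklt.le, hkc, show p + 1 + (s - p) = s + 1 by ring] at this
  have l1 : (seg x (q + 1 + 1) (n - 1)).getLast? = some (x q) :=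
    getLast_seg _ _ _ (by omega) (by rw [Nat.cast_sub (by omega)]; simp)
  have l2 : (seg y (p + 1) k).getLast? = some (y s) :=
    getLast_seg _ _ _ hkpos (by rw [hkc]; ring)
  have l3 : (seg y (s + 1) (m - k)).getLast? = some (y p) :=
    getLast_seg _ _ _ (by omega) (by rw [Nat.cast_sub hklt.le, hkc]; simp; ring)
  have f1 := head_seg x (q + 1 + 1) (k := n - 1) (by omega)
  have f2 := head_seg y (p + 1) hkpos
  have f3 := head_seg y (s + 1) (k := m - k) (by omega)
  refine build (seg x (q + 1 + 1) (n - 1) ++ (seg y (p + 1) k ++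
    ([x (q + 1)] ++ seg y (s + 1) (m - k)))) (q + 1) (p + 1) ?_ ?_ ?_
  · rw [hxl, hyl, List.perm_iff_count]
    intro v
    simp only [List.count_append]
    ring
  · simp only [List.isChain_append, List.head?_append, l1, l2, f2, f3]
    refine ⟨isChain_seg hxa _ _, ⟨isChain_seg hya _ _, ⟨by simp, isChain_seg hya _ _, ?_⟩, ?_⟩, ?_⟩
    · simpa using e3
    · simpa using e2
    · simpa using e1
  · simp only [List.getLast?_append, List.head?_append, l3, f1]
    simpa using e4
end

section
/- Let D_1, D_2, …, D_k (k ≥ 2) be pairwise vertex-disjoint Hamiltonian digraphs and let D ∈ ⊕_{i=1}^k D_i. If D is strong, then D is Hamiltonian. -/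
namespace GenSumHam

variable {α : Type} [DecidableEq α] {r : α → α → Prop}

/-! ### Cycles and paths through a prescribed vertex set -/

/-- `S` is the vertex set of a directed cycle of the relation `r`. The cycle is given by its
periodic parametrization `c : ℤ → α`, whose exact period is the length `n` of the cycle. -/
def IsCyc (r : α → α → Prop) (S : Finset α) : Prop :=
  ∃ n : ℕ, 0 < n ∧ ∃ c : ℤ → α, (∀ i j, c i = c j ↔ (n : ℤ) ∣ i - j) ∧
    (∀ v, v ∈ S ↔ ∃ i, c i = v) ∧ ∀ i, r (c i) (c (i + 1))

/-- There is a directed path of `r` from `x` to `y` with vertex set exactly `S`. -/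
def IsPath (r : α → α → Prop) (S : Finset α) (x y : α) : Prop :=
  ∃ l : List α, l.Nodup ∧ l.toFinset = S ∧ l.IsChain r ∧ l.head? = some x ∧ l.getLast? = some y

lemma isPath_single (x : α) : IsPath r {x} x x :=
  ⟨[x], by simp⟩

lemma IsPath.append {S T : Finset α} {x y z w : α} (h₁ : IsPath r S x y) (h₂ : IsPath r T z w)
    (hd : Disjoint S T) (hr : r y z) : IsPath r (S ∪ T) x w := by
  obtain ⟨l, hl, rfl, hc, hx, hy⟩ := h₁
  obtain ⟨m, hm, rfl, hc', hz, hw⟩ := h₂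
  refine ⟨l ++ m, ?_, by simp, ?_, by simp [hx], by simp [hw]⟩
  · rw [List.nodup_append']
    exact ⟨hl, hm, List.disjoint_toFinset_iff_disjoint.mp hd⟩
  · rw [List.isChain_append]
    refine ⟨hc, hc', ?_⟩
    intro p hp q hq
    simp_all

/-- A path whose last vertex sends an arc to its first vertex closes up to a cycle. -/
lemma IsPath.isCyc {S : Finset α} {x y : α} (h : IsPath r S x y) (hr : r y x) : IsCyc r S := by
  obtain ⟨l, hl, rfl, hc, hx, hy⟩ := h
  have hpos : 0 < l.length := by
    cases l <;> simp_all
  have hposz : (0 : ℤ) < l.length := by exact_mod_cast hpos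
  have hlt : ∀ i : ℤ, (i % l.length).toNat < l.length := by
    intro i
    have h1 := Int.emod_nonneg i hposz.ne'
    have h2 := Int.emod_lt_of_pos i hposz
    omega
  refine ⟨l.length, hpos, fun i => l[(i % l.length).toNat]'(hlt i), ?_, ?_, ?_⟩
  · intro i j
    rw [hl.getElem_inj_iff]
    have h1 := Int.emod_nonneg i hposz.ne'
    have h2 := Int.emod_nonneg j hposz.ne'
    rw [← Int.emod_eq_emod_iff_emod_sub_eq_zero.trans Int.dvd_iff_emod_eq_zero.symm]
    omega
  · intro v
    rw [List.mem_toFinset, List.mem_iff_getElem]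
    constructor
    · rintro ⟨i, hi, rfl⟩
      refine ⟨i, ?_⟩
      have : ((i : ℤ) % l.length).toNat = i := by
        rw [Int.emod_eq_of_lt (by omega) (by omega)]; simp
      simp [this]
    · rintro ⟨i, rfl⟩
      exact ⟨_, hlt i, rfl⟩
  · intro i
    have h1 := Int.emod_nonneg i hposz.ne'
    have h2 := Int.emod_lt_of_pos i hposz
    have h3 : (i + 1) % (l.length : ℤ) = (i % l.length + 1) % l.length := by
      simp [Int.add_emod]
    by_cases hi : i % l.length + 1 = l.length
    · have e1 : ((i + 1) % (l.length : ℤ)).toNat = 0 := by rw [h3, hi]; simp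
      have e2 : (i % (l.length : ℤ)).toNat = l.length - 1 := by omega
      simp only [e1, e2]
      rw [List.getLast?_eq_getElem?, List.getElem?_eq_getElem (by omega)] at hy
      rw [List.head?_eq_getElem?, List.getElem?_eq_getElem (by omega)] at hx
      simp only [Option.some.injEq] at hx hy
      rwa [hx, hy]
    · have e1 : ((i + 1) % (l.length : ℤ)).toNat = (i % (l.length : ℤ)).toNat + 1 := by
        rw [h3, Int.emod_eq_of_lt (by omega) (by omega)]; omega
      simp only [e1]
      exact List.isChain_iff_getElem.mp hc _ (by omega)

/-- The segment `c i, c (i+1), …, c (i+m)` of a cycle of length greater than `m`. -/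
lemma isPath_segment {n : ℕ} {c : ℤ → α} (hinj : ∀ i j, c i = c j ↔ (n : ℤ) ∣ i - j)
    (harc : ∀ i, r (c i) (c (i + 1))) (i : ℤ) (m : ℕ) (hm : m < n) :
    IsPath r ((Finset.Icc i (i + m)).image c) (c i) (c (i + m)) := by
  induction m with
  | zero => simpa using isPath_single (r := r) (c i)
  | succ m ih =>
    have h := (ih (by omega)).append (isPath_single (r := r) (c (i + m + 1))) ?_ (harc _)
    · convert h using 1
      · ext v
        simp only [Finset.mem_image, Finset.mem_Icc, Finset.mem_union, Finset.mem_singleton]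
        constructor
        · rintro ⟨j, hj, rfl⟩
          rcases eq_or_ne j (i + m + 1) with rfl | hne
          · exact Or.inr rfl
          · exact Or.inl ⟨j, by push_cast at hj; omega, rfl⟩
        · rintro (⟨j, hj, rfl⟩ | rfl)
          · exact ⟨j, by push_cast; omega, rfl⟩
          · exact ⟨_, by push_cast; omega, rfl⟩
      · push_cast; ring_nf
    · simp only [Finset.disjoint_singleton_right, Finset.mem_image, Finset.mem_Icc, not_exists,
        not_and]
      intro j hj hc
      rw [hinj] at hc
      have := Int.le_of_dvd (by omega) ((dvd_neg).mpr hc)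
      omega

/-- A window of `n` consecutive indices runs through all vertices of a cycle of length `n`. -/
lemma image_window {n : ℕ} (hn : 0 < n) {c : ℤ → α} {S : Finset α}
    (hinj : ∀ i j, c i = c j ↔ (n : ℤ) ∣ i - j) (hS : ∀ v, v ∈ S ↔ ∃ i, c i = v)
    (i k : ℤ) (hk : k = i + n - 1) : (Finset.Icc i k).image c = S := by
  subst hk
  ext v
  rw [hS, Finset.mem_image]
  constructor
  · rintro ⟨j, -, rfl⟩
    exact ⟨j, rfl⟩
  · rintro ⟨j, rfl⟩
    have hnz : (0 : ℤ) < n := by exact_mod_cast hn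
    have h1 := Int.emod_nonneg (j - i) hnz.ne'
    have h2 := Int.emod_lt_of_pos (j - i) hnz
    refine ⟨i + (j - i) % n, by rw [Finset.mem_Icc]; omega, ?_⟩
    rw [hinj]
    have := Int.emod_add_mul_ediv (j - i) n
    exact ⟨-((j - i) / n), by linarith⟩

/-- A cycle opened up just before its vertex `c i`. -/
lemma isPath_full {n : ℕ} (hn : 0 < n) {c : ℤ → α} {S : Finset α}
    (hinj : ∀ i j, c i = c j ↔ (n : ℤ) ∣ i - j) (hS : ∀ v, v ∈ S ↔ ∃ i, c i = v)
    (harc : ∀ i, r (c i) (c (i + 1))) (i : ℤ) : IsPath r S (c i) (c (i - 1)) := by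
  have h := isPath_segment hinj harc i (n - 1) (by omega)
  rw [image_window hn hinj hS i _ (by omega)] at h
  convert h using 1
  rw [hinj]
  exact ⟨-1, by push_cast [Nat.cast_sub hn]; ring⟩

lemma IsCyc.exists_path {S : Finset α} (h : IsCyc r S) : ∃ x ∈ S, ∃ y ∈ S, IsPath r S x y := by
  obtain ⟨n, hn, c, hinj, hS, harc⟩ := h
  exact ⟨c 0, (hS _).2 ⟨_, rfl⟩, c (0 - 1), (hS _).2 ⟨_, rfl⟩, isPath_full hn hinj hS harc 0⟩

/-! ### Merging cycles -/

/-- `S` dominates `T`: all arcs from `S` to `T` are present. -/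
def Dom (r : α → α → Prop) (S T : Finset α) : Prop := ∀ u ∈ S, ∀ v ∈ T, r u v

lemma three_cycles {S T U : Finset α} (hS : IsCyc r S) (hT : IsCyc r T) (hU : IsCyc r U)
    (hST : Disjoint S T) (hSU : Disjoint S U) (hTU : Disjoint T U)
    (h₁ : Dom r S T) (h₂ : Dom r T U) (h₃ : Dom r U S) : IsCyc r (S ∪ T ∪ U) := by
  obtain ⟨x, hx, y, hy, hp⟩ := hS.exists_path
  obtain ⟨x', hx', y', hy', hp'⟩ := hT.exists_path
  obtain ⟨x'', hx'', y'', hy'', hp''⟩ := hU.exists_path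
  exact ((hp.append hp' hST (h₁ _ hy _ hx')).append hp''
    (Finset.disjoint_union_left.2 ⟨hSU, hTU⟩) (h₂ _ hy' _ hx'')).isCyc (h₃ _ hy'' _ hx)

/-- The alternating path `u 0, v s, u 1, v (s-1), …, v (s-t+1), u t`. -/
lemma zigzag {a b : ℕ} {u v : ℤ → α} (hu : ∀ i j, u i = u j ↔ (a : ℤ) ∣ i - j)
    (hv : ∀ i j, v i = v j ↔ (b : ℤ) ∣ i - j) (huv : ∀ i j, u i ≠ v j) (s : ℤ)
    (h₁ : ∀ i, r (u i) (v (s - i))) (h₂ : ∀ i, r (v (s - i)) (u (i + 1)))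
    (t : ℕ) (hta : t < a) (htb : t ≤ b) :
    IsPath r ((Finset.Icc (0 : ℤ) t).image u ∪ (Finset.Icc (s - t + 1) s).image v) (u 0) (u t) := by
  induction t with
  | zero => simpa using isPath_single (r := r) (u 0)
  | succ t ih =>
    have h := ((ih (by omega) (by omega)).append (isPath_single (r := r) (v (s - t))) ?_
      (h₁ _)).append (isPath_single (r := r) (u (t + 1))) ?_ (h₂ _)
    · convert h using 1
      · ext w
        simp only [Finset.mem_image, Finset.mem_Icc, Finset.mem_union, Finset.mem_singleton]
        constructor
        · rintro (⟨j, hj, rfl⟩ | ⟨j, hj, rfl⟩)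
          · rcases eq_or_ne j (t + 1) with rfl | hne
            · exact Or.inr rfl
            · exact Or.inl (Or.inl (Or.inl ⟨j, by push_cast at hj; omega, rfl⟩))
          · rcases eq_or_ne j (s - t) with rfl | hne
            · exact Or.inl (Or.inr rfl)
            · exact Or.inl (Or.inl (Or.inr ⟨j, by push_cast at hj; omega, rfl⟩))
        · rintro (((⟨j, hj, rfl⟩ | ⟨j, hj, rfl⟩) | rfl) | rfl)
          · exact Or.inl ⟨j, by push_cast; omega, rfl⟩
          · exact Or.inr ⟨j, by push_cast; omega, rfl⟩
          · exact Or.inr ⟨_, by push_cast; omega, rfl⟩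
          · exact Or.inl ⟨_, by push_cast; omega, rfl⟩
      · push_cast; rfl
    · simp only [Finset.disjoint_singleton_right, Finset.mem_union, Finset.mem_image,
        Finset.mem_Icc, not_or, not_exists, not_and]
      refine ⟨fun j _ => huv _ _, fun j hj hc => ?_⟩
      rw [hv] at hc
      have := Int.le_of_dvd (by omega) hc
      omega
    · simp only [Finset.disjoint_singleton_right, Finset.mem_union, Finset.mem_image,
        Finset.mem_Icc, Finset.mem_singleton, not_or, not_exists, not_and]
      refine ⟨⟨fun j hj hc => ?_, fun j _ => (huv _ _).symm⟩, huv _ _⟩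
      rw [hu] at hc
      have := Int.le_of_dvd (by omega) ((dvd_neg).mpr hc)
      omega

/-- The dichotomy for two cycles of lengths `a ≤ b`. -/
lemma two_cycles_aux {S T : Finset α} {a b : ℕ} (ha : 0 < a) (hb : 0 < b) (hab : a ≤ b)
    {u v : ℤ → α} (hu : ∀ i j, u i = u j ↔ (a : ℤ) ∣ i - j)
    (huS : ∀ x, x ∈ S ↔ ∃ i, u i = x) (hur : ∀ i, r (u i) (u (i + 1)))
    (hv : ∀ i j, v i = v j ↔ (b : ℤ) ∣ i - j)
    (hvT : ∀ x, x ∈ T ↔ ∃ i, v i = x) (hvr : ∀ i, r (v i) (v (i + 1)))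
    (hd : Disjoint S T) (hx : ∀ x ∈ S, ∀ y ∈ T, r x y ∨ r y x) :
    IsCyc r (S ∪ T) ∨ Dom r S T ∨ Dom r T S := by
  by_contra! hcon
  obtain ⟨hcyc, hST, hTS⟩ := hcon
  have huv : ∀ i j, u i ≠ v j := fun i j h =>
    Finset.disjoint_left.1 hd ((huS _).2 ⟨i, rfl⟩) ((hvT _).2 ⟨j, h.symm⟩)
  have hx' : ∀ i j, ¬ r (u i) (v j) → r (v j) (u i) := fun i j h =>
    (hx _ ((huS _).2 ⟨i, rfl⟩) _ ((hvT _).2 ⟨j, rfl⟩)).resolve_left h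
  have huper : ∀ i k : ℤ, u (i + a * k) = u i := fun i k => (hu _ _).2 ⟨k, by ring⟩
  have hvper : ∀ i k : ℤ, v (i + b * k) = v i := fun i k => (hv _ _).2 ⟨k, by ring⟩
  -- Otherwise the arcs `u i → v j` and `v (j-1) → u (i+1)` merge the two cycles.
  have step : ∀ i j, r (u i) (v j) → r (u (i + 1)) (v (j - 1)) := by
    intro i j h
    by_contra hn
    have p₁ := isPath_full ha hu huS hur (i + 1)
    have p₂ := isPath_full hb hv hvT hvr j
    rw [add_sub_cancel_right] at p₁
    exact hcyc ((p₁.append p₂ hd h).isCyc (hx' _ _ hn))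
  have steps : ∀ (m : ℕ) (i j : ℤ), r (u i) (v j) → r (u (i + m)) (v (j - m)) := by
    intro m
    induction m with
    | zero => intro i j h; simpa using h
    | succ m ih =>
      intro i j h
      have := step _ _ (ih i j h)
      push_cast
      rwa [← add_assoc, ← sub_sub]
  -- Every step can be undone, since `a * b` steps lead back to the start.
  have back : ∀ i j, r (u (i + 1)) (v (j - 1)) → r (u i) (v j) := by
    intro i j h
    have h' := steps (a * b - 1) _ _ h
    have hpos : 1 ≤ a * b := Nat.mul_pos ha hb
    rw [Nat.cast_sub hpos] at h'
    push_cast at h'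
    rwa [show i + 1 + ((a : ℤ) * b - 1) = i + a * b by ring, huper,
      show j - 1 - ((a : ℤ) * b - 1) = j + b * (-a) by ring, hvper] at h'
  have diag : ∀ i j k : ℤ, r (u (i + k)) (v (j - k)) ↔ r (u i) (v j) := by
    intro i j k
    induction k with
    | zero => simp
    | succ k ih =>
      rw [← ih, ← add_assoc, ← sub_sub]
      exact ⟨back _ _, step _ _⟩
    | pred k ih =>
      rw [← ih]
      have e₁ : i + -(k : ℤ) = i + (-(k : ℤ) - 1) + 1 := by ring
      have e₂ : j - -(k : ℤ) = j - (-(k : ℤ) - 1) - 1 := by ring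
      rw [e₁, e₂]
      exact ⟨step _ _, back _ _⟩
  have diag0 : ∀ i j : ℤ, r (u i) (v j) ↔ r (u 0) (v (i + j)) := by
    intro i j
    have := diag 0 (i + j) i
    rwa [zero_add, add_sub_cancel_left] at this
  -- If both directions occur, the direction changes between some `s` and `s + 1`.
  obtain ⟨s, hs, hs'⟩ : ∃ s, r (u 0) (v s) ∧ ¬ r (u 0) (v (s + 1)) := by
    by_contra! hall
    apply hST
    have hex : ∃ s₀, r (u 0) (v s₀) := by
      by_contra! hno
      apply hTS
      intro y hy x hx
      obtain ⟨i, rfl⟩ := (huS x).1 hx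
      obtain ⟨j, rfl⟩ := (hvT y).1 hy
      exact hx' _ _ (fun h => hno _ ((diag0 _ _).1 h))
    obtain ⟨s₀, hs₀⟩ := hex
    have hup : ∀ m : ℕ, r (u 0) (v (s₀ + m)) := by
      intro m
      induction m with
      | zero => simpa using hs₀
      | succ m ih =>
        have := hall _ ih
        push_cast
        rwa [← add_assoc]
    intro x hx y hy
    obtain ⟨i, rfl⟩ := (huS x).1 hx
    obtain ⟨j, rfl⟩ := (hvT y).1 hy
    rw [diag0]
    have hbz : (0 : ℤ) < b := by exact_mod_cast hb
    have hm := hup ((i + j - s₀) % b).toNat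
    rw [Int.toNat_of_nonneg (Int.emod_nonneg _ hbz.ne')] at hm
    have e : v (s₀ + (i + j - s₀) % b) = v (i + j) := by
      rw [hv]
      have := Int.emod_add_mul_ediv (i + j - s₀) b
      exact ⟨-((i + j - s₀) / b), by linarith⟩
    rwa [e] at hm
  have p₁ := zigzag (r := r) hu hv huv s
    (fun i => by rw [diag0, add_sub_cancel]; exact hs)
    (fun i => hx' _ _ (by rw [diag0, show i + 1 + (s - i) = s + 1 by ring]; exact hs'))
    (a - 1) (by omega) (by omega)
  have p₂ := isPath_segment hv hvr (s + 1) (b - a) (by omega)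
  have ea : ((a - 1 : ℕ) : ℤ) = a - 1 := by omega
  have eb : ((b - a : ℕ) : ℤ) = b - a := by omega
  rw [ea] at p₁
  rw [eb] at p₂
  rw [image_window ha hu huS 0 _ (by ring)] at p₁
  have hlink : r (u (a - 1)) (v (s + 1)) := by
    have e₁ : u (a - 1) = u (-1) := by rw [hu]; exact ⟨1, by ring⟩
    rw [e₁, diag0, show -1 + (s + 1) = s by ring]
    exact hs
  have hclose : r (v (s + 1 + (b - a))) (u 0) := by
    apply hx'
    have h := diag 0 (s + 1) a
    have e₁ : u (0 + a) = u 0 := by rw [hu]; exact ⟨1, by ring⟩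
    have e₂ : v (s + 1 + (b - a)) = v (s + 1 - a) := by rw [hv]; exact ⟨1, by ring⟩
    rw [e₁] at h
    rw [e₂, h]
    exact hs'
  have hdisj : Disjoint (S ∪ (Finset.Icc (s - (a - 1) + 1) s).image v)
      ((Finset.Icc (s + 1) (s + 1 + (b - a))).image v) := by
    rw [Finset.disjoint_left]
    intro w hw hw'
    obtain ⟨j, hj, rfl⟩ := Finset.mem_image.1 hw'
    rcases Finset.mem_union.1 hw with hw | hw
    · obtain ⟨i, hi⟩ := (huS _).1 hw
      exact huv _ _ hi
    · obtain ⟨i, hi, hij⟩ := Finset.mem_image.1 hw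
      rw [Finset.mem_Icc] at hi hj
      rw [eq_comm, hv] at hij
      have := Int.le_of_dvd (by omega) hij
      omega
  have p := p₁.append p₂ hdisj hlink
  refine hcyc ?_
  convert p.isCyc hclose using 1
  rw [Finset.union_assoc, ← Finset.image_union,
    ← image_window hb hv hvT (s - (a - 1) + 1) (s + 1 + (b - a)) (by ring)]
  congr 2
  ext j
  simp only [Finset.mem_union, Finset.mem_Icc]
  omega

/-- Two disjoint cycles with all pairs of vertices adjacent merge into one cycle, unless one of
them dominates the other. -/
lemma two_cycles {S T : Finset α} (hS : IsCyc r S) (hT : IsCyc r T) (hd : Disjoint S T)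
    (hx : ∀ x ∈ S, ∀ y ∈ T, r x y ∨ r y x) :
    IsCyc r (S ∪ T) ∨ Dom r S T ∨ Dom r T S := by
  obtain ⟨a, ha, u, hu, huS, hur⟩ := hS
  obtain ⟨b, hb, v, hv, hvT, hvr⟩ := hT
  rcases le_total a b with hab | hab
  · exact two_cycles_aux ha hb hab hu huS hur hv hvT hvr hd hx
  · have := two_cycles_aux hb ha hab hv hvT hvr hu huS hur hd.symm
      (fun y hy x hx' => (hx x hx' y hy).symm)
    rw [Finset.union_comm]
    tauto

/-! ### Reducing a cycle factor to a single cycle -/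

/-- `P` is a partition of `V` into vertex sets of directed cycles such that two vertices on
different cycles are joined by exactly one arc. -/
structure CycleFactor (r : α → α → Prop) (V : Finset α) (P : Finset (Finset α)) : Prop where
  cyc : ∀ S ∈ P, IsCyc r S
  disj : ∀ S ∈ P, ∀ T ∈ P, S ≠ T → Disjoint S T
  cover : ∀ x, x ∈ V ↔ ∃ S ∈ P, x ∈ S
  xor : ∀ S ∈ P, ∀ T ∈ P, S ≠ T → ∀ x ∈ S, ∀ y ∈ T, Xor (r x y) (r y x)

lemma IsCyc.nonempty {S : Finset α} (h : IsCyc r S) : S.Nonempty := by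
  obtain ⟨x, hx, -⟩ := h.exists_path
  exact ⟨x, hx⟩

/-- A subfamily `Q` whose union carries a cycle can be replaced by that union. -/
lemma CycleFactor.merge {V : Finset α} {P Q : Finset (Finset α)} (h : CycleFactor r V P)
    (hQ : Q ⊆ P) (hc : IsCyc r (Q.biUnion id)) :
    CycleFactor r V (insert (Q.biUnion id) (P \ Q)) := by
  have key : ∀ S ∈ P \ Q, ∀ x ∈ Q.biUnion id, ∃ T ∈ P, T ≠ S ∧ x ∈ T := by
    intro S hS x hx
    obtain ⟨T, hT, hxT⟩ := Finset.mem_biUnion.1 hx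
    refine ⟨T, hQ hT, ?_, hxT⟩
    rintro rfl
    exact (Finset.mem_sdiff.1 hS).2 hT
  have dis : ∀ S ∈ P \ Q, Disjoint (Q.biUnion id) S := by
    intro S hS
    rw [Finset.disjoint_left]
    intro x hx hxS
    obtain ⟨T, hT, hne, hxT⟩ := key S hS x hx
    exact Finset.disjoint_left.1 (h.disj _ hT _ (Finset.mem_sdiff.1 hS).1 hne) hxT hxS
  have xo : ∀ S ∈ P \ Q, ∀ x ∈ Q.biUnion id, ∀ y ∈ S, Xor (r x y) (r y x) := by
    intro S hS x hx y hy
    obtain ⟨T, hT, hne, hxT⟩ := key S hS x hx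
    exact h.xor _ hT _ (Finset.mem_sdiff.1 hS).1 hne x hxT y hy
  constructor
  · intro S hS
    rcases Finset.mem_insert.1 hS with rfl | hS
    · exact hc
    · exact h.cyc _ (Finset.mem_sdiff.1 hS).1
  · intro S hS T hT hne
    rcases Finset.mem_insert.1 hS with rfl | hS <;> rcases Finset.mem_insert.1 hT with rfl | hT
    · exact absurd rfl hne
    · exact dis _ hT
    · exact (dis _ hS).symm
    · exact h.disj _ (Finset.mem_sdiff.1 hS).1 _ (Finset.mem_sdiff.1 hT).1 hne
  · intro x
    rw [h.cover]
    constructor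
    · rintro ⟨S, hS, hx⟩
      by_cases hSQ : S ∈ Q
      · exact ⟨_, Finset.mem_insert_self _ _, Finset.mem_biUnion.2 ⟨S, hSQ, hx⟩⟩
      · exact ⟨S, Finset.mem_insert_of_mem (Finset.mem_sdiff.2 ⟨hS, hSQ⟩), hx⟩
    · rintro ⟨S, hS, hx⟩
      rcases Finset.mem_insert.1 hS with rfl | hS
      · obtain ⟨T, hT, hxT⟩ := Finset.mem_biUnion.1 hx
        exact ⟨T, hQ hT, hxT⟩
      · exact ⟨S, (Finset.mem_sdiff.1 hS).1, hx⟩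
  · intro S hS T hT hne x hx y hy
    rcases Finset.mem_insert.1 hS with rfl | hS <;> rcases Finset.mem_insert.1 hT with rfl | hT
    · exact absurd rfl hne
    · exact xo _ hT _ hx _ hy
    · exact (xor_comm _ _).mp (xo _ hS _ hy _ hx)
    · exact h.xor _ (Finset.mem_sdiff.1 hS).1 _ (Finset.mem_sdiff.1 hT).1 hne x hx y hy

lemma card_merge_lt {P Q : Finset (Finset α)} (hQ : Q ⊆ P) (hcard : 2 ≤ Q.card) (X : Finset α) :
    (insert X (P \ Q)).card < P.card := by
  have h₁ := Finset.card_insert_le X (P \ Q)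
  have h₂ := Finset.card_sdiff_add_card_eq_card hQ
  omega

/-- A cycle factor of a strong digraph with at least two cycles has a subfamily of at least two
cycles whose union carries a single cycle. -/
lemma CycleFactor.exists_mergeable {V : Finset α} {P : Finset (Finset α)}
    (h : CycleFactor r V P)
    (hstrong : ∀ x ∈ V, ∀ y ∈ V, Relation.ReflTransGen r x y) (hV : ∀ x y, r x y → y ∈ V)
    (hP : 2 ≤ P.card) : ∃ Q ⊆ P, 2 ≤ Q.card ∧ IsCyc r (Q.biUnion id) := by
  classical
  by_contra! hno
  have hdom : ∀ S ∈ P, ∀ T ∈ P, S ≠ T → Dom r S T ∨ Dom r T S := by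
    intro S hS T hT hne
    refine (two_cycles (h.cyc S hS) (h.cyc T hT) (h.disj S hS T hT hne)
      (fun x hx y hy => Xor.or (h.xor S hS T hT hne x hx y hy))).resolve_left ?_
    have := hno {S, T} (by simp [Finset.insert_subset_iff, hS, hT]) (by simp [hne])
    simpa using this
  have hasymm : ∀ S ∈ P, ∀ T ∈ P, S ≠ T → Dom r S T → ¬ Dom r T S := by
    intro S hS T hT hne h₁ h₂
    obtain ⟨x, hx⟩ := (h.cyc S hS).nonempty
    obtain ⟨y, hy⟩ := (h.cyc T hT).nonempty
    rcases h.xor S hS T hT hne x hx y hy with h' | h'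
    · exact h'.2 (h₂ _ hy _ hx)
    · exact h'.2 (h₁ _ hx _ hy)
  have htrans : ∀ S ∈ P, ∀ T ∈ P, ∀ U ∈ P, S ≠ T → T ≠ U → Dom r S T → Dom r T U →
      S ≠ U ∧ Dom r S U := by
    intro S hS T hT U hU h₁ h₂ d₁ d₂
    have hSU : S ≠ U := by
      rintro rfl
      exact hasymm S hS T hT h₁ d₁ d₂
    refine ⟨hSU, (hdom S hS U hU hSU).resolve_right fun d₃ => ?_⟩
    have hc := three_cycles (h.cyc S hS) (h.cyc T hT) (h.cyc U hU) (h.disj S hS T hT h₁)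
      (h.disj S hS U hU hSU) (h.disj T hT U hU h₂) d₁ d₂ d₃
    have := hno {S, T, U} (by simp [Finset.insert_subset_iff, hS, hT, hU])
      (by rw [Finset.card_eq_three.2 ⟨S, T, U, h₁, hSU, h₂, rfl⟩]; omega)
    apply this
    simpa [Finset.union_assoc] using hc
  -- A cycle dominating the fewest others dominates none, as domination is transitive.
  obtain ⟨S, hS, hmin⟩ := Finset.exists_min_image P
    (fun S => (P.filter fun T => S ≠ T ∧ Dom r S T).card) (Finset.card_pos.1 (by omega))
  have hsink : ∀ T ∈ P, S ≠ T → ¬ Dom r S T := by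
    intro T hT hne hd
    refine absurd (hmin T hT) (not_le.2 (Finset.card_lt_card ?_))
    rw [Finset.ssubset_iff_of_subset]
    · exact ⟨T, by simp [hT, hne, hd], by simp⟩
    · intro U hU
      rw [Finset.mem_filter] at hU ⊢
      exact ⟨hU.1, htrans S hS T hT U hU.1 hne hU.2.1 hd hU.2.2⟩
  obtain ⟨T, hT, hTS⟩ := Finset.exists_mem_ne (show 1 < P.card by omega) S
  obtain ⟨x, hx⟩ := (h.cyc S hS).nonempty
  obtain ⟨y, hy⟩ := (h.cyc T hT).nonempty
  have hstay : ∀ z, Relation.ReflTransGen r x z → z ∈ S := by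
    intro z hz
    induction hz with
    | refl => exact hx
    | @tail z w _ hzw ih =>
      obtain ⟨U, hU, hw⟩ := (h.cover w).1 (hV _ _ hzw)
      by_contra hwS
      have hne : S ≠ U := by
        rintro rfl
        exact hwS hw
      have hUS := (hdom S hS U hU hne).resolve_left (hsink U hU hne)
      rcases h.xor S hS U hU hne z ih w hw with h' | h'
      · exact h'.2 (hUS _ hw _ ih)
      · exact h'.2 hzw
  exact Finset.disjoint_left.1 (h.disj T hT S hS hTS) hy
    (hstay y (hstrong x ((h.cover x).2 ⟨S, hS, hx⟩) y ((h.cover y).2 ⟨T, hT, hy⟩)))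

lemma CycleFactor.isCyc {V : Finset α}
    (hstrong : ∀ x ∈ V, ∀ y ∈ V, Relation.ReflTransGen r x y) (hV : ∀ x y, r x y → y ∈ V)
    (n : ℕ) : ∀ P : Finset (Finset α), P.card = n → P.Nonempty → CycleFactor r V P → IsCyc r V := by
  induction n using Nat.strong_induction_on with
  | _ n ih =>
    intro P hn hne h
    by_cases hP : 2 ≤ P.card
    · obtain ⟨Q, hQ, hcard, hc⟩ := h.exists_mergeable hstrong hV hP
      exact ih _ (hn ▸ card_merge_lt hQ hcard (Q.biUnion id)) _ rfl (Finset.insert_nonempty _ _)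
        (h.merge hQ hc)
    · obtain ⟨S, rfl⟩ := Finset.card_eq_one.1 (show P.card = 1 by
        have := Finset.card_pos.2 hne
        omega)
      have : V = S := by
        ext x
        simpa using h.cover x
      exact this ▸ h.cyc S (by simp)

/-! ### Translation to `FinDigraph` -/

lemma isCyc_of_hamiltonian {D : FinDigraph α} (h : D.Hamiltonian) : IsCyc D.Arc D.verts := by
  obtain ⟨c, ⟨hinj, harc⟩, hsurj⟩ := h
  refine ⟨D.verts.card, Finset.card_pos.2 ⟨_, D.arc_mem_left (harc 0)⟩, fun i => c i, ?_, ?_, ?_⟩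
  · intro i j
    rw [hinj.eq_iff, eq_comm, ZMod.intCast_eq_intCast_iff_dvd_sub]
  · intro v
    constructor
    · intro hv
      obtain ⟨i, rfl⟩ := hsurj v hv
      exact ⟨(i.cast : ℤ), by simp⟩
    · rintro ⟨i, rfl⟩
      exact D.arc_mem_left (harc i)
  · intro i
    simpa using harc i

lemma hamiltonian_of_isCyc {D : FinDigraph α} (h : IsCyc D.Arc D.verts) : D.Hamiltonian := by
  obtain ⟨n, hn, c, hinj, hS, harc⟩ := h
  have hcard : D.verts.card = n := by
    rw [← image_window hn hinj hS 0 (0 + n - 1) rfl, Finset.card_image_of_injOn]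
    · simp
    · intro i hi j hj hij
      rw [Finset.mem_coe, Finset.mem_Icc] at hi hj
      rw [hinj] at hij
      have := Int.eq_zero_of_abs_lt_dvd hij (by rw [abs_lt]; omega)
      omega
  unfold FinDigraph.Hamiltonian
  rw [hcard]
  have hcast : ∀ i : ℤ, c ((i : ZMod n).cast : ℤ) = c i := by
    intro i
    rw [hinj, ← ZMod.intCast_eq_intCast_iff_dvd_sub]
    simp
  refine ⟨fun z => c (z.cast : ℤ), ⟨?_, ?_⟩, ?_⟩
  · intro x y hxy
    rw [hinj, ← ZMod.intCast_eq_intCast_iff_dvd_sub] at hxy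
    simpa using hxy.symm
  · intro z
    have h₁ := hcast ((z.cast : ℤ) + 1)
    push_cast at h₁
    change D.Arc (c _) (c _)
    rw [h₁]
    exact harc _
  · intro v hv
    obtain ⟨i, rfl⟩ := (hS v).1 hv
    exact ⟨(i : ZMod n), hcast i⟩

end GenSumHam

open FinDigraph

theorem stmt_9 {α : Type} [DecidableEq α] {k : ℕ} (hk : 2 ≤ k)
    (Ds : Fin k → FinDigraph α)
    (hdisj : ∀ i j : Fin k, i ≠ j → Disjoint (Ds i).verts (Ds j).verts)
    (hham : ∀ i : Fin k, (Ds i).Hamiltonian)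
    (D : FinDigraph α) (hD : GenSum Ds D) (hstrong : D.Strong) :
    D.Hamiltonian := by
  obtain ⟨hverts, hind, hxor⟩ := hD
  apply GenSumHam.hamiltonian_of_isCyc
  refine GenSumHam.CycleFactor.isCyc hstrong (fun _ _ h => D.arc_mem_right h) _
    (Finset.univ.image fun i => (Ds i).verts) rfl ⟨_, Finset.mem_image_of_mem _
      (Finset.mem_univ (⟨0, by omega⟩ : Fin k))⟩ ⟨?_, ?_, ?_, ?_⟩
  · intro S hS
    obtain ⟨i, -, rfl⟩ := Finset.mem_image.1 hS
    obtain ⟨n, hn, c, hinj, hc, harc⟩ := GenSumHam.isCyc_of_hamiltonian (hham i)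
    exact ⟨n, hn, c, hinj, hc, fun j =>
      (hind i _ _ ((hc _).2 ⟨_, rfl⟩) ((hc _).2 ⟨_, rfl⟩)).2 (harc j)⟩
  · intro S hS T hT hne
    obtain ⟨i, -, rfl⟩ := Finset.mem_image.1 hS
    obtain ⟨j, -, rfl⟩ := Finset.mem_image.1 hT
    exact hdisj i j (fun h => hne (by rw [h]))
  · intro x
    simp [hverts]
  · intro S hS T hT hne
    obtain ⟨i, -, rfl⟩ := Finset.mem_image.1 hS
    obtain ⟨j, -, rfl⟩ := Finset.mem_image.1 hT
    exact fun x hx y hy => hxor i j (fun h => hne (by rw [h])) x y hx hy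
end

section
/- Let D_1, D_2, …, D_k (k ≥ 2) be pairwise vertex-disjoint Hamiltonian digraphs and let D ∈ ⊕_{i=1}^k D_i. If D is strong and contains no good cycle, then D is vertex-pancyclic. -/
open FinDigraph

/-- An arc of `D` which belongs to none of the summands `Ds i`. -/
def ExteriorArc {α : Type} [DecidableEq α] {k : ℕ} (Ds : Fin k → FinDigraph α)
    (D : FinDigraph α) (u v : α) : Prop :=
  D.Arc u v ∧ ∀ i : Fin k, ¬ (Ds i).Arc u v

/-- `D` contains a good cycle: an anti-directed 4-cycle `v₀v₁v₂v₃v₀` with arcs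
`(v₀,v₁), (v₂,v₁), (v₂,v₃), (v₀,v₃)` such that `(v₀,v₁)` and `(v₂,v₃)` are both
exterior, or `(v₂,v₁)` and `(v₀,v₃)` are both exterior. -/
def HasGoodCycle {α : Type} [DecidableEq α] {k : ℕ} (Ds : Fin k → FinDigraph α)
    (D : FinDigraph α) : Prop :=
  ∃ v0 v1 v2 v3 : α,
    v0 ≠ v1 ∧ v0 ≠ v2 ∧ v0 ≠ v3 ∧ v1 ≠ v2 ∧ v1 ≠ v3 ∧ v2 ≠ v3 ∧
    D.Arc v0 v1 ∧ D.Arc v2 v1 ∧ D.Arc v2 v3 ∧ D.Arc v0 v3 ∧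
    ((ExteriorArc Ds D v0 v1 ∧ ExteriorArc Ds D v2 v3) ∨
     (ExteriorArc Ds D v2 v1 ∧ ExteriorArc Ds D v0 v3))

section Helpers

variable {α : Type} [DecidableEq α]

/-- Two disjoint cycles `a`, `b` of `D`, completely joined by single arcs, whose orientation is
constant along antidiagonals, and such that two vertices of one cycle never both dominate the same
two vertices of the other. -/
structure TwoCycles {m n : ℕ} (D : FinDigraph α) (a : ZMod m → α) (b : ZMod n → α) : Prop where
  hm : 2 ≤ m
  hn : 2 ≤ n
  ha : D.CycleOn a
  hb : D.CycleOn b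
  ne : ∀ x y, a x ≠ b y
  xor : ∀ x y, D.Arc (b y) (a x) ↔ ¬ D.Arc (a x) (b y)
  diag : ∀ x y, D.Arc (a x) (b y) → D.Arc (a (x + 1)) (b (y - 1))
  sq : ∀ x z y w, x ≠ z → y ≠ w → D.Arc (a x) (b y) → D.Arc (a z) (b y) →
    D.Arc (a x) (b w) → D.Arc (a z) (b w) → False
  sq' : ∀ x z y w, x ≠ z → y ≠ w → D.Arc (b y) (a x) → D.Arc (b y) (a z) →
    D.Arc (b w) (a x) → D.Arc (b w) (a z) → False

/-- There is a cycle of length `l` through both `u` and `v`. -/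
def CycleThroughBoth (D : FinDigraph α) (l : ℕ) (u v : α) : Prop :=
  ∃ c : ZMod l → α, D.CycleOn c ∧ (∃ i, c i = u) ∧ ∃ i, c i = v

lemma CycleThroughBoth.left {D : FinDigraph α} {l : ℕ} {u v : α}
    (h : CycleThroughBoth D l u v) : D.HasCycleThrough l u := by
  obtain ⟨c, hc, hu, -⟩ := h
  exact ⟨c, hc, hu⟩

lemma CycleThroughBoth.right {D : FinDigraph α} {l : ℕ} {u v : α}
    (h : CycleThroughBoth D l u v) : D.HasCycleThrough l v := by
  obtain ⟨c, hc, -, hv⟩ := h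
  exact ⟨c, hc, hv⟩

/-! ### Symmetries of a pair of cycles -/

lemma CycleOn.rotate {D : FinDigraph α} {m : ℕ} {a : ZMod m → α} (ha : D.CycleOn a) (c : ZMod m) :
    D.CycleOn (fun x => a (x + c)) := by
  refine ⟨fun x y h => add_right_cancel (ha.1 h), fun i => ?_⟩
  have := ha.2 (i + c)
  rwa [show i + c + 1 = i + 1 + c by ring] at this

namespace TwoCycles

variable {m n : ℕ} {D : FinDigraph α} {a : ZMod m → α} {b : ZMod n → α}

lemma symm (h : TwoCycles D a b) : TwoCycles D b a where
  hm := h.hn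
  hn := h.hm
  ha := h.hb
  hb := h.ha
  ne := fun x y => (h.ne y x).symm
  xor := fun x y => by rw [h.xor y x, not_not]
  diag := fun y x hyx => by
    rw [h.xor] at hyx ⊢
    intro hc
    apply hyx
    simpa using h.diag _ _ hc
  sq := fun y y' x x' hy hx h1 h2 h3 h4 => h.sq' x x' y y' hx hy h1 h3 h2 h4
  sq' := fun y y' x x' hy hx h1 h2 h3 h4 => h.sq x x' y y' hx hy h1 h3 h2 h4

lemma rotate (h : TwoCycles D a b) (c : ZMod m) : TwoCycles D (fun x => a (x + c)) b where
  hm := h.hm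
  hn := h.hn
  ha := CycleOn.rotate h.ha c
  hb := h.hb
  ne := fun x y => h.ne _ y
  xor := fun x y => h.xor _ y
  diag := fun x y hxy => by
    have := h.diag _ _ hxy
    rwa [show x + c + 1 = x + 1 + c by ring] at this
  sq := fun x x' y y' hx hy => h.sq _ _ y y' (fun e => hx (add_right_cancel e)) hy
  sq' := fun x x' y y' hx hy => h.sq' _ _ y y' (fun e => hx (add_right_cancel e)) hy

lemma diag_iter (h : TwoCycles D a b) {x : ZMod m} {y : ZMod n} (hxy : D.Arc (a x) (b y)) (t : ℕ) :
    D.Arc (a (x + t)) (b (y - t)) := by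
  induction t with
  | zero => simpa using hxy
  | succ t ih =>
    have := h.diag _ _ ih
    push_cast
    rwa [show x + (t + 1 : ZMod m) = x + t + 1 by ring,
      show y - (t + 1 : ZMod n) = y - t - 1 by ring]

lemma diag_inv (h : TwoCycles D a b) {x : ZMod m} {y : ZMod n} (hxy : D.Arc (a x) (b y)) :
    D.Arc (a (x - 1)) (b (y + 1)) := by
  -- `m * n` steps along the antidiagonal lead back to the start
  have h1 : 1 ≤ m * n := Nat.mul_pos (by have := h.hm; omega) (by have := h.hn; omega)
  have := h.diag_iter hxy (m * n - 1)
  rw [Nat.cast_sub h1, Nat.cast_sub h1] at this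
  simpa [sub_eq_add_neg] using this

end TwoCycles

/-! ### Explicit cycles -/

/-- A cycle given by its first `l` values on the natural numbers. -/
lemma cycleOn_of_nat {D : FinDigraph α} {l : ℕ} (hl : 2 ≤ l) (w : ℕ → α)
    (hinj : ∀ i j, i < j → j < l → w i ≠ w j)
    (harc : ∀ i, i + 1 < l → D.Arc (w i) (w (i + 1))) (hlast : D.Arc (w (l - 1)) (w 0)) :
    D.CycleOn (fun i : ZMod l => w i.val) := by
  have : NeZero l := ⟨by omega⟩
  have : Fact (1 < l) := ⟨by omega⟩
  refine ⟨fun i j hij => ?_, fun i => ?_⟩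
  · apply ZMod.val_injective
    rcases lt_trichotomy i.val j.val with h | h | h
    · exact absurd hij (hinj _ _ h j.val_lt)
    · exact h
    · exact absurd hij.symm (hinj _ _ h i.val_lt)
  · have hi := i.val_lt
    have hv : (i + 1).val = (i.val + 1) % l := by rw [ZMod.val_add, ZMod.val_one]
    simp only [hv]
    by_cases h : i.val + 1 < l
    · rw [Nat.mod_eq_of_lt h]
      exact harc _ h
    · have : i.val + 1 = l := by omega
      rw [this, Nat.mod_self, show i.val = l - 1 by omega]
      exact hlast

lemma natCast_inj_of_lt {n i j : ℕ} (hi : i < n) (hj : j < n) (h : (i : ZMod n) = j) : i = j := by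
  have := (ZMod.natCast_eq_natCast_iff' i j n).1 h
  rwa [Nat.mod_eq_of_lt hi, Nat.mod_eq_of_lt hj] at this

namespace TwoCycles

variable {m n : ℕ} {D : FinDigraph α}

/-- Cycles of every length when the first cycle has length 2: for odd `l` the cycle
`a 0, b 0, b 1, …, b (l-2)`, for even `l` the cycle `a 0, b 0, a 1, b 1, …, b (l-3)`. -/
lemma two_core {a : ZMod 2 → α} {b : ZMod n → α} (h : TwoCycles D a b)
    (hx : ∀ y, D.Arc (a 0) (b y) ↔ ¬ D.Arc (a 1) (b y)) (h0 : D.Arc (a 0) (b 0))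
    {l : ℕ} (hl : 3 ≤ l) (hle : l ≤ 2 + n) : CycleThroughBoth D l (a 0) (b 0) := by
  have hn := h.hn
  have : Fact (1 < l) := ⟨by omega⟩
  -- the orientation of the arcs at `a 0` alternates along `b`
  have halt : ∀ y : ZMod n, D.Arc (a 0) (b (y + 1)) ↔ ¬ D.Arc (a 0) (b y) := by
    intro y
    have e1 : D.Arc (a 0) (b (y + 1)) → D.Arc (a 1) (b y) := fun hh => by
      simpa using h.diag _ _ hh
    have e2 : D.Arc (a 1) (b y) → D.Arc (a 0) (b (y + 1)) := fun hh => by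
      simpa using h.diag_inv hh
    have := hx y
    tauto
  have hpar : ∀ j : ℕ, D.Arc (a 0) (b j) ↔ Even j := by
    intro j
    induction j with
    | zero => simpa using h0
    | succ j ih => push_cast; rw [halt, ih, Nat.even_add_one]
  have hpar1 : ∀ j : ℕ, D.Arc (a 1) (b j) ↔ ¬ Even j := by
    intro j
    have := hx j
    rw [hpar] at this
    tauto
  have hbinj : ∀ i j : ℕ, i < n → j < n → i ≠ j → b i ≠ b j := fun i j hi hj hij e =>
    hij (natCast_inj_of_lt hi hj (h.hb.1 e))
  have hneven : Even n := by
    rw [← hpar n]; simpa using h0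
  rcases Nat.even_or_odd l with he | ho
  · let w : ℕ → α := fun i => if i = 0 then a 0 else if i = 1 then b 0 else if i = 2 then a 1
      else b ((i - 2 : ℕ) : ZMod n)
    refine ⟨fun i => w i.val, cycleOn_of_nat (by omega) w ?_ ?_ ?_, ⟨0, by simp [w]⟩,
      ⟨1, by simp [w, ZMod.val_one]⟩⟩
    · intro i j hij hj
      have h01 : a 0 ≠ a 1 := fun e => absurd (h.ha.1 e) (by decide)
      have hb0 : ∀ j : ℕ, 0 < j → j < n → b 0 ≠ b j := fun j hj hjn => by
        simpa using hbinj 0 j (by omega) hjn (by omega)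
      simp only [w]
      split_ifs <;>
        first
        | omega
        | exact h01
        | exact h.ne _ _
        | exact (h.ne _ _).symm
        | exact hb0 _ (by omega) (by omega)
        | exact hbinj _ _ (by omega) (by omega) (by omega)
    · intro i hi
      rcases i with _ | _ | _ | i
      · simpa [w] using h0
      · have : D.Arc (b 0) (a 1) := by
          rw [h.xor]; exact (hx 0).1 h0
        simpa [w] using this
      · have := (hpar1 1).2 (by decide)
        simpa [w] using this
      · have := h.hb.2 ((i + 1 : ℕ) : ZMod n)
        simpa [w, add_assoc, one_add_one_eq_two] using this
    · have : D.Arc (b ((l - 1 - 2 : ℕ) : ZMod n)) (a 0) := by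
        rw [h.xor, hpar]
        intro h2
        rw [Nat.even_iff] at he h2
        omega
      have h3 : l ≠ 3 := by
        rintro rfl; exact absurd he (by decide)
      simpa [w, show l - 1 ≠ 0 by omega, show l - 1 ≠ 1 by omega, show l - 1 ≠ 2 by omega]
        using this
  · have hln : l ≤ n + 1 := by
      rw [Nat.odd_iff] at ho
      rw [Nat.even_iff] at hneven
      omega
    let w : ℕ → α := fun i => if i = 0 then a 0 else b ((i - 1 : ℕ) : ZMod n)
    refine ⟨fun i => w i.val, cycleOn_of_nat (by omega) w ?_ ?_ ?_, ⟨0, by simp [w]⟩,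
      ⟨1, by simp [w, ZMod.val_one]⟩⟩
    · intro i j hij hj
      simp only [w]
      split_ifs <;>
        first
        | omega
        | exact h.ne _ _
        | exact hbinj _ _ (by omega) (by omega) (by omega)
    · intro i hi
      rcases i with _ | i
      · simpa [w] using h0
      · have := h.hb.2 (i : ZMod n)
        simpa [w] using this
    · have : D.Arc (b ((l - 1 - 1 : ℕ) : ZMod n)) (a 0) := by
        rw [h.xor, hpar]
        intro h2
        rw [Nat.odd_iff] at ho
        rw [Nat.even_iff] at h2
        omega
      simpa [w, show l - 1 ≠ 0 by omega] using this

lemma two_left {a : ZMod 2 → α} {b : ZMod n → α} (h : TwoCycles D a b)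
    (hx : ∀ y, D.Arc (a 0) (b y) ↔ ¬ D.Arc (a 1) (b y))
    {l : ℕ} (hl : 3 ≤ l) (hle : l ≤ 2 + n) : D.HasCycleThrough l (a 0) := by
  by_cases h0 : D.Arc (a 0) (b 0)
  · exact (h.two_core hx h0 hl hle).left
  · have h1 : D.Arc (a 1) (b 0) := by
      by_contra hc; exact h0 ((hx 0).2 hc)
    have h2 : D.Arc (a 0) (b (-1)) := by
      have := h.diag _ _ h1
      rwa [show (1 + 1 : ZMod 2) = 0 by decide, zero_sub] at this
    have := ((h.symm.rotate (-1)).symm).two_core (fun y => hx _) (by simpa using h2) hl hle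
    exact this.left

lemma two_right {a : ZMod 2 → α} {b : ZMod n → α} (h : TwoCycles D a b)
    (hx : ∀ y, D.Arc (a 0) (b y) ↔ ¬ D.Arc (a 1) (b y))
    {l : ℕ} (hl : 3 ≤ l) (hle : l ≤ 2 + n) : D.HasCycleThrough l (b 0) := by
  by_cases h0 : D.Arc (a 0) (b 0)
  · exact (h.two_core hx h0 hl hle).right
  · have h1 : D.Arc (a 1) (b 0) := by
      by_contra hc; exact h0 ((hx 0).2 hc)
    have := (h.rotate 1).two_core (fun y => by
      have := hx y
      rw [zero_add, show (1 + 1 : ZMod 2) = 0 by decide]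
      tauto) (by simpa using h1) hl hle
    exact this.right

end TwoCycles

/-- Transfer of a cycle from a labelling by `ZMod m ⊕ ZMod m`. -/
lemma cycleThroughBoth_of_label {m l : ℕ} {D : FinDigraph α} {a b : ZMod m → α}
    (h : TwoCycles D a b) (w : ZMod l → ZMod m ⊕ ZMod m) (hw : Function.Injective w)
    (harc : ∀ i, D.Arc (Sum.elim a b (w i)) (Sum.elim a b (w (i + 1))))
    (ha : ∃ i, w i = Sum.inl 0) (hb : ∃ i, w i = Sum.inr 0) :
    CycleThroughBoth D l (a 0) (b 0) := by
  refine ⟨fun i => Sum.elim a b (w i), ⟨fun i j hij => hw ?_, harc⟩, ?_, ?_⟩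
  · exact (h.ha.1.sumElim h.hb.1 h.ne) hij
  · obtain ⟨i, hi⟩ := ha
    exact ⟨i, by simp [hi]⟩
  · obtain ⟨i, hi⟩ := hb
    exact ⟨i, by simp [hi]⟩

/-- The arcs guaranteed when `a x → b y` holds exactly for `x + y ∈ {0, 1}`. -/
def labelArc {m : ℕ} : ZMod m ⊕ ZMod m → ZMod m ⊕ ZMod m → Prop
  | .inl x, .inl x' => x' = x + 1
  | .inr y, .inr y' => y' = y + 1
  | .inl x, .inr y => x + y = 0 ∨ x + y = 1
  | .inr y, .inl x => ¬ (x + y = 0 ∨ x + y = 1)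

instance {m : ℕ} : DecidableRel (labelArc (m := m))
  | .inl x, .inl x' => inferInstanceAs (Decidable (x' = x + 1))
  | .inr y, .inr y' => inferInstanceAs (Decidable (y' = y + 1))
  | .inl x, .inr y => inferInstanceAs (Decidable (x + y = 0 ∨ x + y = 1))
  | .inr y, .inl x => inferInstanceAs (Decidable (¬ (x + y = 0 ∨ x + y = 1)))

namespace TwoCycles

variable {m : ℕ} {D : FinDigraph α} {a b : ZMod m → α}

lemma arc_of_labelArc (h : TwoCycles D a b)
    (hS : ∀ x y, D.Arc (a x) (b y) ↔ (x + y = 0 ∨ x + y = 1)) {u v : ZMod m ⊕ ZMod m}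
    (huv : labelArc u v) : D.Arc (Sum.elim a b u) (Sum.elim a b v) := by
  rcases u with x | y <;> rcases v with x' | y' <;> simp only [labelArc] at huv <;>
    simp only [Sum.elim_inl, Sum.elim_inr]
  · subst huv; exact h.ha.2 x
  · exact (hS _ _).2 huv
  · rw [h.xor, hS]; exact huv
  · subst huv; exact h.hb.2 y

/-- The labels are indexed by `Fin (r + 1)`, which is `ZMod (r + 1)` by definition, so that the
hypotheses are decidable for explicit lists. -/
lemma of_labels (h : TwoCycles D a b)
    (hS : ∀ x y, D.Arc (a x) (b y) ↔ (x + y = 0 ∨ x + y = 1)) {r : ℕ}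
    (w : Fin (r + 1) → ZMod m ⊕ ZMod m) (hw : Function.Injective w)
    (harc : ∀ i, labelArc (w i) (w (i + 1))) (ha : ∃ i, w i = Sum.inl 0)
    (hb : ∃ i, w i = Sum.inr 0) : CycleThroughBoth D (r + 1) (a 0) (b 0) :=
  cycleThroughBoth_of_label (l := r + 1) h w hw (fun i => h.arc_of_labelArc hS (harc i)) ha hb

end TwoCycles

open Sum in
lemma TwoCycles.three_core {D : FinDigraph α} {a b : ZMod 3 → α} (h : TwoCycles D a b)
    (hS : ∀ x y, D.Arc (a x) (b y) ↔ (x + y = 0 ∨ x + y = 1))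
    {l : ℕ} (hl : 3 ≤ l) (hle : l ≤ 6) : CycleThroughBoth D l (a 0) (b 0) := by
  interval_cases l
  · exact h.of_labels hS ![inl 0, inr 0, inl 2] (by decide) (by decide) (by decide) (by decide)
  · exact h.of_labels hS ![inl 0, inr 0, inl 2, inr 2]
      (by decide) (by decide) (by decide) (by decide)
  · exact h.of_labels hS ![inl 0, inr 0, inl 2, inr 1, inr 2]
      (by decide) (by decide) (by decide) (by decide)
  · exact h.of_labels hS ![inl 0, inr 0, inl 2, inr 1, inl 1, inr 2]
      (by decide) (by decide) (by decide) (by decide)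

open Sum in
lemma TwoCycles.four_core {D : FinDigraph α} {a b : ZMod 4 → α} (h : TwoCycles D a b)
    (hS : ∀ x y, D.Arc (a x) (b y) ↔ (x + y = 0 ∨ x + y = 1))
    {l : ℕ} (hl : 3 ≤ l) (hle : l ≤ 8) : CycleThroughBoth D l (a 0) (b 0) := by
  interval_cases l
  · exact h.of_labels hS ![inl 0, inr 0, inl 3] (by decide) (by decide) (by decide) (by decide)
  · exact h.of_labels hS ![inl 0, inr 0, inl 2, inl 3]
      (by decide) (by decide) (by decide) (by decide)
  · exact h.of_labels hS ![inl 0, inr 0, inr 1, inl 2, inl 3]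
      (by decide) (by decide) (by decide) (by decide)
  · exact h.of_labels hS ![inl 0, inr 0, inr 1, inl 1, inl 2, inl 3]
      (by decide) (by decide) (by decide) (by decide)
  · exact h.of_labels hS ![inl 0, inr 0, inr 1, inl 2, inl 3, inr 2, inr 3]
      (by decide) (by decide) (by decide) (by decide)
  · exact h.of_labels hS ![inl 0, inr 0, inl 3, inr 1, inl 2, inr 2, inl 1, inr 3]
      (by decide) (by decide) (by decide) (by decide)

/-! ### Classification of two cycles -/

namespace TwoCycles

section

variable {m n : ℕ} {D : FinDigraph α} {a : ZMod m → α} {b : ZMod n → α}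

/-- If the first cycle is shorter, each vertex of the second one tells apart any two of its
vertices. -/
lemma arc_iff_not_of_lt (h : TwoCycles D a b) (hmn : m < n) {x x' : ZMod m} (hx : x ≠ x')
    (y : ZMod n) : D.Arc (a x) (b y) ↔ ¬ D.Arc (a x') (b y) := by
  have hm := h.hm
  have hm0 : (m : ZMod n) ≠ 0 := by
    intro e
    exact absurd (Nat.le_of_dvd (by omega) ((ZMod.natCast_eq_zero_iff m n).1 e)) (by omega)
  have sh : ∀ x, D.Arc (a x) (b y) → D.Arc (a x) (b (y - m)) := fun x hh => by
    simpa using h.diag_iter hh m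
  have sh' : ∀ x, D.Arc (b y) (a x) → D.Arc (b (y + m)) (a x) := fun x hh => by
    simpa using h.symm.diag_iter hh m
  constructor
  · intro h1 h2
    exact h.sq x x' y (y - m) hx (fun e => hm0 (sub_eq_self.1 e.symm)) h1 h2 (sh _ h1) (sh _ h2)
  · intro h2
    by_contra h1
    rw [← h.xor] at h1 h2
    exact h.sq' x x' y (y + m) hx (fun e => hm0 (by simpa using e)) h1 h2 (sh' _ h1) (sh' _ h2)

lemma eq_two_of_lt (h : TwoCycles D a b) (hmn : m < n) : m = 2 := by
  have hm := h.hm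
  by_contra hne
  have d : ∀ i j : ℕ, i < j → j < 3 → (i : ZMod m) ≠ j := fun i j hij hj e => by
    have := natCast_inj_of_lt (by omega) (by omega) e
    omega
  -- among three vertices two have the same orientation towards `b 0`
  have h1 := h.arc_iff_not_of_lt hmn (d 0 1 (by omega) (by omega)) 0
  have h2 := h.arc_iff_not_of_lt hmn (d 0 2 (by omega) (by omega)) 0
  have h3 := h.arc_iff_not_of_lt hmn (d 1 2 (by omega) (by omega)) 0
  tauto

end

variable {m : ℕ} {D : FinDigraph α} {a b : ZMod m → α}

lemma arc_iff_sum (h : TwoCycles D a b) (x y : ZMod m) :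
    D.Arc (a x) (b y) ↔ D.Arc (a (x + y)) (b 0) := by
  have : NeZero m := ⟨by have := h.hm; omega⟩
  constructor
  · intro hh
    simpa using h.diag_iter hh y.val
  · intro hh
    simpa using h.diag_iter hh (-y).val

/-- A set of residues in which every nonzero difference occurs at most once has at most
`m - 1` ordered pairs of distinct elements. -/
lemma card_of_distinct_differences [NeZero m] (S : Finset (ZMod m))
    (hS : ∀ s q q' : ZMod m, s ≠ 0 → q ≠ q' → q ∈ S → q + s ∈ S → q' ∈ S → q' + s ∈ S → False) :
    S.card * S.card - S.card ≤ m - 1 := by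
  rw [← Finset.offDiag_card]
  have h2 : (Finset.univ.erase (0 : ZMod m)).card = m - 1 := by
    rw [Finset.card_erase_of_mem (Finset.mem_univ _), Finset.card_univ, ZMod.card]
  rw [← h2]
  apply Finset.card_le_card_of_injOn (fun p => p.1 - p.2)
  · rintro ⟨p, q⟩ hp
    simp only [Finset.coe_offDiag, Set.mem_offDiag] at hp
    simpa using sub_ne_zero.2 hp.2.2
  · rintro ⟨p, q⟩ hp ⟨p', q'⟩ hp' e
    simp only [Finset.coe_offDiag, Set.mem_offDiag, Finset.mem_coe] at hp hp'
    simp only at e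
    by_cases hq : q = q'
    · subst hq
      simpa using e
    · exfalso
      refine hS (p - q) q q' (sub_ne_zero.2 hp.2.2) hq hp.2.1 (by simpa using hp.1) hp'.2.1 ?_
      rw [e]
      simpa using hp'.1

lemma sum_set (h : TwoCycles D a b) {s q q' : ZMod m} (hs : s ≠ 0) (hq : q ≠ q')
    (h1 : D.Arc (a q) (b 0)) (h2 : D.Arc (a (q + s)) (b 0)) (h3 : D.Arc (a q') (b 0))
    (h4 : D.Arc (a (q' + s)) (b 0)) : False := by
  refine h.sq 0 s q q' hs.symm hq ?_ ?_ ?_ ?_ <;> rw [h.arc_iff_sum]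
  · simpa using h1
  · rwa [add_comm]
  · simpa using h3
  · rwa [add_comm]

lemma sum_set' (h : TwoCycles D a b) {s q q' : ZMod m} (hs : s ≠ 0) (hq : q ≠ q')
    (h1 : ¬ D.Arc (a q) (b 0)) (h2 : ¬ D.Arc (a (q + s)) (b 0)) (h3 : ¬ D.Arc (a q') (b 0))
    (h4 : ¬ D.Arc (a (q' + s)) (b 0)) : False := by
  refine h.sq' 0 s q q' hs.symm hq ?_ ?_ ?_ ?_ <;> rw [h.xor, h.arc_iff_sum]
  · simpa using h1
  · rwa [add_comm]
  · simpa using h3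
  · rwa [add_comm]

lemma le_four (h : TwoCycles D a b) : m ≤ 4 := by
  classical
  have hm := h.hm
  have : NeZero m := ⟨by omega⟩
  have h1 := card_of_distinct_differences (Finset.univ.filter fun t => D.Arc (a t) (b 0))
    (fun s q q' hs hq i1 i2 i3 i4 => by
      simp only [Finset.mem_filter, Finset.mem_univ, true_and] at i1 i2 i3 i4
      exact h.sum_set hs hq i1 i2 i3 i4)
  have h2 := card_of_distinct_differences (Finset.univ.filter fun t => ¬ D.Arc (a t) (b 0))
    (fun s q q' hs hq i1 i2 i3 i4 => by
      simp only [Finset.mem_filter, Finset.mem_univ, true_and] at i1 i2 i3 i4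
      exact h.sum_set' hs hq i1 i2 i3 i4)
  have h3 := Finset.card_filter_add_card_filter_not (s := Finset.univ)
    (fun t : ZMod m => D.Arc (a t) (b 0))
  rw [Finset.card_univ, ZMod.card] at h3
  generalize (Finset.univ.filter fun t => D.Arc (a t) (b 0)).card = s at *
  generalize (Finset.univ.filter fun t => ¬ D.Arc (a t) (b 0)).card = r at *
  have h1' : s * s + 1 ≤ m + s := by omega
  have h2' : r * r + 1 ≤ m + r := by omega
  -- `s² + r² ≥ (s + r)² / 2` leaves only `m ≤ 5`
  have h5 : m ≤ 5 := by
    subst h3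
    zify at *
    nlinarith [sq_nonneg ((s : ℤ) - r)]
  by_contra h6
  have h7 : m = 5 := by omega
  have : s ≤ 5 := by omega
  have : r ≤ 5 := by omega
  interval_cases s <;> interval_cases r <;> omega

/-- Exchanging the two cycles replaces the set of sums by its complement. -/
lemma symm_arc (h : TwoCycles D a b) (t : ZMod m) :
    D.Arc (b t) (a 0) ↔ ¬ D.Arc (a t) (b 0) := by
  rw [h.xor, h.arc_iff_sum, zero_add]

end TwoCycles

lemma TwoCycles.three_left {D : FinDigraph α} {a b : ZMod 3 → α} (h : TwoCycles D a b)
    {l : ℕ} (hl : 3 ≤ l) (hle : l ≤ 6) : D.HasCycleThrough l (a 0) := by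
  -- with two sums `c`, `c + 1` oriented `a → b`, rotating `a` or `b` by `c` gives `{0, 1}`
  have key : ∀ {a b : ZMod 3 → α} (h : TwoCycles D a b) (c : ZMod 3), D.Arc (a c) (b 0) →
      D.Arc (a (c + 1)) (b 0) → ¬ D.Arc (a (c + 2)) (b 0) →
      CycleThroughBoth D l (a 0) (b c) ∧ CycleThroughBoth D l (a c) (b 0) := by
    intro a b h c h0 h1 h2
    have hsh : ∀ t : ZMod 3, D.Arc (a (t + c)) (b 0) ↔ (t = 0 ∨ t = 1) := by
      intro t
      rw [add_comm]
      have ht : t = 0 ∨ t = 1 ∨ t = 2 := by revert t; decide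
      rcases ht with rfl | rfl | rfl
      · simpa using h0
      · simpa using h1
      · exact iff_of_false h2 (by decide)
    constructor
    · have := (h.symm.rotate c).symm.three_core (l := l) (fun x y => by
        rw [h.arc_iff_sum, ← add_assoc, hsh]) hl hle
      simpa using this
    · have := (h.rotate c).three_core (l := l) (fun x y => by
        rw [h.arc_iff_sum, add_right_comm, hsh]) hl hle
      simpa using this
  by_cases g0 : D.Arc (a 0) (b 0) <;> by_cases g1 : D.Arc (a 1) (b 0) <;>
    by_cases g2 : D.Arc (a 2) (b 0)
  · exact (h.sum_set (s := 1) (q := 0) (q' := 1) (by decide) (by decide) g0 g1 g1 g2).elim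
  · exact (key h 0 g0 g1 g2).1.left
  · exact (key h 2 g2 g0 g1).1.left
  · exact (key h.symm 1 ((h.symm_arc _).2 g1) ((h.symm_arc _).2 g2)
      (by rw [h.symm_arc]; exact not_not.2 g0)).2.right
  · exact (key h 1 g1 g2 g0).1.left
  · exact (key h.symm 2 ((h.symm_arc _).2 g2) ((h.symm_arc _).2 g0)
      (by rw [h.symm_arc]; exact not_not.2 g1)).2.right
  · exact (key h.symm 0 ((h.symm_arc _).2 g0) ((h.symm_arc _).2 g1)
      (by rw [h.symm_arc]; exact not_not.2 g2)).2.right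
  · exact (h.sum_set' (s := 1) (q := 0) (q' := 1) (by decide) (by decide) g0 g1 g1 g2).elim

lemma TwoCycles.four_left {D : FinDigraph α} {a b : ZMod 4 → α} (h : TwoCycles D a b)
    {l : ℕ} (hl : 3 ≤ l) (hle : l ≤ 8) : D.HasCycleThrough l (a 0) := by
  have key : ∀ c : ZMod 4, D.Arc (a c) (b 0) → D.Arc (a (c + 1)) (b 0) →
      ¬ D.Arc (a (c + 2)) (b 0) → ¬ D.Arc (a (c + 3)) (b 0) →
      D.HasCycleThrough l (a 0) := by
    intro c h0 h1 h2 h3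
    have hsh : ∀ t : ZMod 4, D.Arc (a (t + c)) (b 0) ↔ (t = 0 ∨ t = 1) := by
      intro t
      rw [add_comm]
      have ht : t = 0 ∨ t = 1 ∨ t = 2 ∨ t = 3 := by revert t; decide
      rcases ht with rfl | rfl | rfl | rfl
      · simpa using h0
      · simpa using h1
      · exact iff_of_false h2 (by decide)
      · exact iff_of_false h3 (by decide)
    exact ((h.symm.rotate c).symm.four_core (l := l) (fun x y => by
        rw [h.arc_iff_sum, ← add_assoc, hsh]) hl hle).left
  -- opposite sums `q`, `q + 2` have different orientations, since `2 = -2`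
  have opp : ∀ q : ZMod 4, D.Arc (a q) (b 0) ↔ ¬ D.Arc (a (q + 2)) (b 0) := by
    intro q
    have e : q + 2 + 2 = q := by revert q; decide
    have hq : q ≠ q + 2 := by revert q; decide
    constructor
    · intro i j
      exact h.sum_set (s := 2) (by decide) hq i j j (by rwa [e])
    · intro j
      by_contra i
      exact h.sum_set' (s := 2) (by decide) hq i j j (by rwa [e])
  have o0 : D.Arc (a 0) (b 0) ↔ ¬ D.Arc (a 2) (b 0) := opp 0
  have o1 : D.Arc (a 1) (b 0) ↔ ¬ D.Arc (a 3) (b 0) := opp 1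
  by_cases g0 : D.Arc (a 0) (b 0) <;> by_cases g1 : D.Arc (a 1) (b 0)
  · exact key 0 g0 g1 (o0.1 g0) (o1.1 g1)
  · have g3 : D.Arc (a 3) (b 0) := by tauto
    exact key 3 g3 g0 g1 (o0.1 g0)
  · have g2 : D.Arc (a 2) (b 0) := by tauto
    exact key 1 g1 g2 (o1.1 g1) g0
  · have g2 : D.Arc (a 2) (b 0) := by tauto
    have g3 : D.Arc (a 3) (b 0) := by tauto
    exact key 2 g2 g3 g0 g1

lemma TwoCycles.arc_iff_not_two {D : FinDigraph α} {a b : ZMod 2 → α} (h : TwoCycles D a b)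
    (y : ZMod 2) : D.Arc (a 0) (b y) ↔ ¬ D.Arc (a 1) (b y) := by
  have e : ∀ q : ZMod 2, q + 1 + 1 = q := by decide
  have hq : ∀ q : ZMod 2, q ≠ q + 1 := by decide
  rw [h.arc_iff_sum 0, h.arc_iff_sum 1, zero_add, add_comm 1 y]
  constructor
  · intro i j
    exact h.sum_set (s := 1) (by decide) (hq y) i j j (by rwa [e])
  · intro j
    by_contra i
    exact h.sum_set' (s := 1) (by decide) (hq y) i j j (by rwa [e])

lemma TwoCycles.through_zero {m n : ℕ} {D : FinDigraph α} {a : ZMod m → α} {b : ZMod n → α}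
    (h : TwoCycles D a b) {l : ℕ} (hl : 3 ≤ l) (hle : l ≤ m + n) : D.HasCycleThrough l (a 0) := by
  rcases lt_trichotomy m n with hmn | hmn | hmn
  · obtain rfl := h.eq_two_of_lt hmn
    exact h.two_left (h.arc_iff_not_of_lt hmn (by decide)) hl hle
  · subst hmn
    have h4 := h.le_four
    have h2 := h.hm
    interval_cases m
    · exact h.two_left h.arc_iff_not_two hl hle
    · exact h.three_left hl hle
    · exact h.four_left hl hle
  · obtain rfl := h.symm.eq_two_of_lt hmn
    exact h.symm.two_right (h.symm.arc_iff_not_of_lt hmn (by decide)) hl (by omega)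

lemma TwoCycles.through {m n : ℕ} {D : FinDigraph α} {a : ZMod m → α} {b : ZMod n → α}
    (h : TwoCycles D a b) {l : ℕ} (hl : 3 ≤ l) (hle : l ≤ m + n) (x : ZMod m) :
    D.HasCycleThrough l (a x) := by
  simpa using (h.rotate x).through_zero hl hle

/-! ### Generalized sums without good cycles -/

lemma two_le_card_of_cycleOn {D : FinDigraph α} {l : ℕ} {c : ZMod l → α} (hc : D.CycleOn c) :
    2 ≤ D.verts.card := by
  by_contra hlt
  have h0 := hc.2 0
  have := Finset.card_le_one.1 (by omega : D.verts.card ≤ 1) _ (D.arc_mem_left h0) _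
    (D.arc_mem_right h0)
  rw [← this] at h0
  exact D.arc_irrefl _ h0

end Helpers

theorem stmt_11 {α : Type} [DecidableEq α] {k : ℕ} (hk : 2 ≤ k)
    (Ds : Fin k → FinDigraph α)
    (hdisj : ∀ i j : Fin k, i ≠ j → Disjoint (Ds i).verts (Ds j).verts)
    (hham : ∀ i : Fin k, (Ds i).Hamiltonian)
    (D : FinDigraph α) (hD : GenSum Ds D) (hstrong : D.Strong)
    (hng : ¬ HasGoodCycle Ds D) :
    D.VertexPancyclic := by
  choose C hC using hham
  obtain ⟨hV, hin, hout⟩ := hD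
  have hcard : ∀ i, 2 ≤ (Ds i).verts.card := fun i => two_le_card_of_cycleOn (hC i).1
  have hmem : ∀ i x, C i x ∈ (Ds i).verts := fun i x => (Ds i).arc_mem_left ((hC i).1.2 x)
  have hcyc : ∀ i, D.CycleOn (C i) := fun i => ⟨(hC i).1.1, fun x =>
    (hin i _ _ (hmem i _) (hmem i _)).2 ((hC i).1.2 x)⟩
  have hxor : ∀ i j, i ≠ j → ∀ x y, D.Arc (C j y) (C i x) ↔ ¬ D.Arc (C i x) (C j y) := by
    intro i j hij x y
    rcases hout i j hij _ _ (hmem i x) (hmem j y) with h | h <;> tauto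
  have hne : ∀ i j, i ≠ j → ∀ x y, C i x ≠ C j y := by
    intro i j hij x y e
    exact Finset.disjoint_left.1 (hdisj i j hij) (hmem i x) (e ▸ hmem j y)
  have hext : ∀ i j, i ≠ j → ∀ x y, D.Arc (C i x) (C j y) → ExteriorArc Ds D (C i x) (C j y) := by
    intro i j hij x y harc
    refine ⟨harc, fun l hl => ?_⟩
    have e1 : l = i := by
      by_contra hne
      exact Finset.disjoint_left.1 (hdisj l i hne) ((Ds l).arc_mem_left hl) (hmem i x)
    have e2 : l = j := by
      by_contra hne
      exact Finset.disjoint_left.1 (hdisj l j hne) ((Ds l).arc_mem_right hl) (hmem j y)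
    exact hij (e1.symm.trans e2)
  have ng : ∀ v0 v1 v2 v3, v0 ≠ v2 → v1 ≠ v3 → D.Arc v0 v1 → D.Arc v2 v3 →
      ExteriorArc Ds D v2 v1 → ExteriorArc Ds D v0 v3 → False := by
    intro v0 v1 v2 v3 h02 h13 a01 a23 e21 e03
    have irr : ∀ {u v}, D.Arc u v → u ≠ v := fun huv e => D.arc_irrefl _ (e ▸ huv)
    exact hng ⟨v0, v1, v2, v3, irr a01, h02, irr e03.1, (irr e21.1).symm, h13, irr a23,
      a01, e21.1, a23, e03.1, Or.inr ⟨e21, e03⟩⟩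
  have hsucc : ∀ i (x : ZMod (Ds i).verts.card), x ≠ x + 1 := fun i x e => by
    have h0 := (hcyc i).2 x
    rw [← e] at h0
    exact D.arc_irrefl _ h0
  have pair : ∀ i j, i ≠ j → TwoCycles D (C i) (C j) := fun i j hij =>
    { hm := hcard i
      hn := hcard j
      ha := hcyc i
      hb := hcyc j
      ne := hne i j hij
      xor := hxor i j hij
      diag := fun x y hxy => by
        by_contra hc
        rw [← hxor i j hij] at hc
        have hy := (hcyc j).2 (y - 1)
        rw [sub_add_cancel] at hy
        exact ng (C i x) (C i (x + 1)) (C j (y - 1)) (C j y) (hne i j hij _ _) (hne i j hij _ _)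
          ((hcyc i).2 x) hy (hext j i hij.symm _ _ hc) (hext i j hij _ _ hxy)
      sq := fun x x' y y' hx hy h1 h2 h3 h4 =>
        ng (C i x) (C j y) (C i x') (C j y') (fun e => hx ((hcyc i).1 e))
          (fun e => hy ((hcyc j).1 e)) h1 h4 (hext i j hij _ _ h2) (hext i j hij _ _ h3)
      sq' := fun x x' y y' hx hy h1 h2 h3 h4 =>
        ng (C j y) (C i x) (C j y') (C i x') (fun e => hy ((hcyc j).1 e))
          (fun e => hx ((hcyc i).1 e)) h1 h4 (hext j i hij.symm _ _ h3)
          (hext j i hij.symm _ _ h2) }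
  -- no vertex `w` of one cycle dominates a whole other cycle, since its successor would too
  have notall : ∀ i j, i ≠ j → ∀ w, ∃ x, D.Arc (C i x) (C j w) := by
    intro i j hij w
    by_contra hc
    push Not at hc
    have h1 : ∀ x, D.Arc (C j w) (C i x) := fun x => (hxor i j hij x w).2 (hc x)
    have h2 : ∀ x, D.Arc (C j (w + 1)) (C i x) := fun x => by
      simpa using (pair j i hij.symm).diag w (x + 1) (h1 _)
    exact (pair i j hij).sq' 0 (0 + 1) w (w + 1) (hsucc i 0) (hsucc j w) (h1 _) (h1 _) (h2 _) (h2 _)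
  have triple : ∀ i j l, i ≠ j → i ≠ l → j ≠ l → ∀ x y w, D.Arc (C i x) (C l w) →
      D.Arc (C j y) (C l w) → D.Arc (C i (x + 1)) (C j y) := by
    intro i j l hij hil hjl x y w hx hy
    by_contra hc
    rw [← hxor i j hij] at hc
    exact ng (C i x) (C i (x + 1)) (C j y) (C l w) (hne i j hij _ _) (hne i l hil _ _)
      ((hcyc i).2 x) hy (hext j i hij.symm _ _ hc) (hext i l hil _ _ hx)
  have hk2 : k = 2 := by
    by_contra hk3
    have d01 : (⟨0, by omega⟩ : Fin k) ≠ ⟨1, by omega⟩ := by simp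
    have d02 : (⟨0, by omega⟩ : Fin k) ≠ ⟨2, by omega⟩ := by simp
    have d12 : (⟨1, by omega⟩ : Fin k) ≠ ⟨2, by omega⟩ := by simp
    obtain ⟨x, hx⟩ := notall _ _ d02 0
    obtain ⟨y, hy⟩ := notall _ _ d12 0
    have h1 := triple _ _ _ d01 d02 d12 x y 0 hx hy
    have h2 := triple _ _ _ d01.symm d12 d02 y x 0 hy hx
    have h3 := (pair _ _ d01.symm).diag_inv h2
    rw [add_sub_cancel_right] at h3
    rw [hxor _ _ d01] at h3
    exact h3 h1
  subst hk2
  have h01 : (0 : Fin 2) ≠ 1 := by decide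
  have hVc : D.verts.card = (Ds 0).verts.card + (Ds 1).verts.card := by
    rw [hV, ← Finset.card_union_of_disjoint (hdisj 0 1 h01)]
    congr 1
    ext v
    simp [Fin.exists_fin_two]
  refine ⟨by have := hcard 0; have := hcard 1; omega, fun v hv l hl hle => ?_⟩
  rw [hV] at hv
  simp only [Finset.mem_biUnion, Finset.mem_univ, true_and, Fin.exists_fin_two] at hv
  rcases hv with hv | hv
  · obtain ⟨x, rfl⟩ := (hC 0).2 v hv
    exact (pair 0 1 h01).through hl (by omega) x
  · obtain ⟨x, rfl⟩ := (hC 1).2 v hv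
    exact (pair 1 0 h01.symm).through hl (by omega) x
end

section
/- Let D_1 and D_2 be two vertex-disjoint digraphs with Hamiltonian cycles C_1 = (x_0, x_1, …, x_{n−1}, x_0) and C_2 = (y_0, y_1, …, y_{m−1}, y_0) respectively, and let D ∈ D_1 ⊕ D_2. Let l be a fixed integer with 3 ≤ l ≤ n+1 such that D has no directed cycle of length l, and let d = gcd(n, l−2). Then (with subscripts of the x's taken modulo n and of the y's modulo m): (a) if (x_s, y_r) ∈ A(D), then (x_{s+k+i(l−2)}, y_{r+k}) ∈ A(D) for all integers i, k ≥ 0, and for each k ≥ 0 the set {(x_{s+k+i(l−2)}, y_{r+k}) : i ≥ 0} equals {(x_{s+k+id}, y_{r+k}) : i ≥ 0}; and (b) if (y_{r'}, x_{s'}) ∈ A(D), then (y_{r'+k}, x_{s'+k+i(l−2)}) ∈ A(D) for all integers i, k ≥ 0, and for each k ≥ 0 the set {(y_{r'+k}, x_{s'+k+i(l−2)}) : i ≥ 0} equals {(y_{r'+k}, x_{s'+k+id}) : i ≥ 0}. -/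
open FinDigraph

/-- A sequence with distinct entries `f 0, …, f (l - 1)`, consecutive ones joined by arcs and the
last joined to the first, is a directed cycle of length `l`. -/
lemma hasCycle_of_seq {α : Type} [DecidableEq α] (D : FinDigraph α) (l : ℕ) (hl : 2 ≤ l)
    (f : ℕ → α) (hinj : ∀ a b, a < l → b < l → f a = f b → a = b)
    (harc : ∀ a, a + 1 < l → D.Arc (f a) (f (a + 1)))
    (hlast : D.Arc (f (l - 1)) (f 0)) : D.HasCycle l := by
  have : NeZero l := ⟨by omega⟩
  have : Fact (1 < l) := ⟨by omega⟩
  refine ⟨fun i => f i.val, ?_, ?_⟩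
  · intro a b hab
    exact ZMod.val_injective l (hinj _ _ (ZMod.val_lt a) (ZMod.val_lt b) hab)
  · intro i
    have hi := ZMod.val_lt i
    have hv : (i + 1).val = (i.val + 1) % l := by
      rw [ZMod.val_add, ZMod.val_one]
    show D.Arc (f i.val) (f (i + 1).val)
    rw [hv]
    by_cases h : i.val + 1 < l
    · rw [Nat.mod_eq_of_lt h]
      exact harc _ h
    · have h1 : i.val + 1 = l := by omega
      have h2 : i.val = l - 1 := by omega
      rw [h1, Nat.mod_self, h2]
      exact hlast

lemma natCast_inj_of_lt_s14 {n a b : ℕ} (ha : a < n) (hb : b < n)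
    (h : (a : ZMod n) = (b : ZMod n)) : a = b := by
  rw [ZMod.natCast_eq_natCast_iff'] at h
  rwa [Nat.mod_eq_of_lt ha, Nat.mod_eq_of_lt hb] at h

/-- Two disjoint cycles `x` and `y` of `D`: a path of `p` vertices along `x` starting at `x t` and
a path of `q` vertices along `y` starting at `y r` combine to a cycle of length `p + q` once the
end of each is joined to the start of the other. -/
lemma hasCycle_of_closing {α : Type} [DecidableEq α] (D : FinDigraph α) {n m : ℕ}
    (x : ZMod n → α) (y : ZMod m → α) (hx : D.CycleOn x) (hy : D.CycleOn y)
    (hxy : ∀ s r, x s ≠ y r) (p q : ℕ) (hp : 1 ≤ p) (hpn : p ≤ n) (hq : 1 ≤ q) (hqm : q ≤ m)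
    (t : ZMod n) (r : ZMod m)
    (h1 : D.Arc (x (t + ((p - 1 : ℕ) : ZMod n))) (y r))
    (h2 : D.Arc (y (r + ((q - 1 : ℕ) : ZMod m))) (x t)) : D.HasCycle (p + q) := by
  refine hasCycle_of_seq D (p + q) (by omega)
    (fun i => if i < p then x (t + (i : ZMod n)) else y (r + ((i - p : ℕ) : ZMod m))) ?_ ?_ ?_
  · intro a b ha hb hab
    by_cases hap : a < p <;> by_cases hbp : b < p <;> simp only [hap, hbp, if_true, if_false] at hab
    · exact natCast_inj_of_lt_s14 (by omega) (by omega) (add_left_cancel (hx.1 hab))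
    · exact absurd hab (hxy _ _)
    · exact absurd hab.symm (hxy _ _)
    · have := natCast_inj_of_lt_s14 (by omega) (by omega) (add_left_cancel (hy.1 hab))
      omega
  · intro a ha
    by_cases hap : a + 1 < p
    · have : a < p := by omega
      simp only [hap, this, if_true]
      have := hx.2 (t + (a : ZMod n))
      push_cast
      rwa [add_assoc] at this
    · by_cases hap' : a < p
      · have e : a = p - 1 := by omega
        have e' : a + 1 - p = 0 := by omega
        simp only [hap, hap', if_true, if_false, e']
        simpa [e] using h1
      · have e' : a + 1 - p = (a - p) + 1 := by omega
        simp only [hap, hap', if_false, e']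
        have := hy.2 (r + ((a - p : ℕ) : ZMod m))
        push_cast
        rwa [add_assoc] at this
  · have e : ¬ (p + q - 1 < p) := by omega
    have e' : p + q - 1 - p = q - 1 := by omega
    have hp0 : 0 < p := hp
    simp only [e, e', hp0, if_true, if_false]
    simpa using h2

/-- The relation `x s → y r` is invariant under the shifts `(l - 2, 0)` and `(1, 1)`. -/
lemma shift_invariant {α : Type} [DecidableEq α] (D : FinDigraph α) {n m : ℕ}
    (x : ZMod n → α) (y : ZMod m → α) (hx : D.CycleOn x) (hy : D.CycleOn y)
    (hxy : ∀ s r, x s ≠ y r) (hor : ∀ s r, ¬ D.Arc (x s) (y r) → D.Arc (y r) (x s))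
    (hm : 2 ≤ m) (l : ℕ) (hl3 : 3 ≤ l) (hln : l ≤ n + 1) (hnoc : ¬ D.HasCycle l)
    (s : ZMod n) (r : ZMod m) (h : D.Arc (x s) (y r)) (k i : ℕ) :
    D.Arc (x (s + (k : ZMod n) + ((i * (l - 2) : ℕ) : ZMod n))) (y (r + (k : ZMod m))) := by
  obtain ⟨e, rfl⟩ : ∃ e, l = e + 3 := ⟨l - 3, by omega⟩
  have hsub : e + 3 - 2 = e + 1 := by omega
  rw [hsub]
  have down : ∀ (s : ZMod n) (r : ZMod m), D.Arc (x s) (y r) →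
      D.Arc (x (s - ((e + 1 : ℕ) : ZMod n))) (y r) := by
    intro s r h
    by_contra hc
    refine hnoc (hasCycle_of_closing D x y hx hy hxy (e + 2) 1 (by omega) (by omega) le_rfl
      (by omega) (s - ((e + 1 : ℕ) : ZMod n)) r ?_ ?_)
    · simpa using h
    · simpa using hor _ _ hc
  have downs : ∀ (j : ℕ) (s : ZMod n) (r : ZMod m), D.Arc (x s) (y r) →
      D.Arc (x (s - ((j * (e + 1) : ℕ) : ZMod n))) (y r) := by
    intro j
    induction j with
    | zero => intro s r h; simpa using h
    | succ j ih =>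
      intro s r h
      have := down _ _ (ih s r h)
      convert this using 2
      push_cast
      ring
  have up : ∀ (i : ℕ) (s : ZMod n) (r : ZMod m), D.Arc (x s) (y r) →
      D.Arc (x (s + ((i * (e + 1) : ℕ) : ZMod n))) (y r) := by
    intro i s r h
    -- Modulo `n`, adding `i` copies is subtracting `(n - 1) * i` copies.
    have := downs ((n - 1) * i) s r h
    convert this using 2
    rw [Nat.cast_mul, Nat.cast_mul, Nat.cast_mul, Nat.cast_sub (by omega : 1 ≤ n)]
    simp
  have diag : ∀ (s : ZMod n) (r : ZMod m), D.Arc (x s) (y r) →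
      D.Arc (x (s + 1)) (y (r + 1)) := by
    intro s r h
    have h' : D.Arc (x (s - (e : ZMod n))) (y (r + 1)) := by
      by_contra hc
      refine hnoc (hasCycle_of_closing D x y hx hy hxy (e + 1) 2 (by omega) (by omega) (by omega)
        hm (s - (e : ZMod n)) r ?_ ?_)
      · simpa using h
      · simpa using hor _ _ hc
    have := up 1 _ _ h'
    convert this using 2
    push_cast
    ring
  have diags : ∀ k : ℕ, D.Arc (x (s + (k : ZMod n))) (y (r + (k : ZMod m))) := by
    intro k
    induction k with
    | zero => simpa using h
    | succ k ih =>
      have := diag _ _ ih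
      push_cast
      rwa [add_assoc, add_assoc] at this
  exact up i _ _ (diags k)

/-- `a` and `gcd n a` have the same multiples modulo `n`. -/
lemma exists_mul_eq_iff {n : ℕ} (hn : n ≠ 0) (a : ℕ) (P : ZMod n → Prop) :
    (∃ i : ℕ, P ((i * a : ℕ) : ZMod n)) ↔ ∃ i : ℕ, P ((i * Nat.gcd n a : ℕ) : ZMod n) := by
  have : NeZero n := ⟨hn⟩
  constructor
  · rintro ⟨i, hi⟩
    refine ⟨i * (a / Nat.gcd n a), ?_⟩
    rwa [mul_assoc, Nat.div_mul_cancel (Nat.gcd_dvd_right n a)]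
  · rintro ⟨i, hi⟩
    refine ⟨((i : ZMod n) * (Nat.gcdB n a : ZMod n)).val, ?_⟩
    have hb : ((Nat.gcd n a : ℕ) : ZMod n) = (a : ZMod n) * (Nat.gcdB n a : ZMod n) := by
      have := congrArg (Int.cast : ℤ → ZMod n) (Nat.gcd_eq_gcd_ab n a)
      simpa using this
    have he : (((((i : ZMod n) * (Nat.gcdB n a : ZMod n)).val * a : ℕ)) : ZMod n)
        = ((i * Nat.gcd n a : ℕ) : ZMod n) := by
      rw [Nat.cast_mul, Nat.cast_mul, ZMod.natCast_zmod_val, hb]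
      ring
    rwa [he]

theorem stmt_14 {α : Type} [DecidableEq α]
    (D1 D2 D : FinDigraph α) {n m : ℕ}
    (x : ZMod n → α) (y : ZMod m → α)
    (hx : D1.IsHamCycle x) (hy : D2.IsHamCycle y)
    (hdisj : Disjoint D1.verts D2.verts)
    (hD : GenSum2 D1 D2 D)
    (l : ℕ) (hl3 : 3 ≤ l) (hln : l ≤ n + 1) (hnoc : ¬ D.HasCycle l)
    (d : ℕ) (hd : d = Nat.gcd n (l - 2)) :
    (∀ (s : ZMod n) (r : ZMod m), D.Arc (x s) (y r) →
      (∀ k i : ℕ,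
        D.Arc (x (s + (k : ZMod n) + ((i * (l - 2) : ℕ) : ZMod n))) (y (r + (k : ZMod m)))) ∧
      (∀ k : ℕ,
        {p : α × α | ∃ i : ℕ,
            p = (x (s + (k : ZMod n) + ((i * (l - 2) : ℕ) : ZMod n)), y (r + (k : ZMod m)))} =
        {p : α × α | ∃ i : ℕ,
            p = (x (s + (k : ZMod n) + ((i * d : ℕ) : ZMod n)), y (r + (k : ZMod m)))})) ∧
    (∀ (r' : ZMod m) (s' : ZMod n), D.Arc (y r') (x s') →
      (∀ k i : ℕ,
        D.Arc (y (r' + (k : ZMod m))) (x (s' + (k : ZMod n) + ((i * (l - 2) : ℕ) : ZMod n)))) ∧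
      (∀ k : ℕ,
        {p : α × α | ∃ i : ℕ,
            p = (y (r' + (k : ZMod m)), x (s' + (k : ZMod n) + ((i * (l - 2) : ℕ) : ZMod n)))} =
        {p : α × α | ∃ i : ℕ,
            p = (y (r' + (k : ZMod m)), x (s' + (k : ZMod n) + ((i * d : ℕ) : ZMod n)))})) := by
  subst hd
  have hn0 : n ≠ 0 := by omega
  have hxm : ∀ s, x s ∈ D1.verts := fun s => D1.arc_mem_left (hx.1.2 s)
  have hym : ∀ r, y r ∈ D2.verts := fun r => D2.arc_mem_left (hy.1.2 r)
  -- `ZMod 0` is infinite and `D2` has finitely many vertices; `m = 1` would give a loop in `D2`.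
  have hm : 2 ≤ m := by
    rcases m with _ | _ | m
    · exfalso
      have hfin : (Set.range y).Finite :=
        D2.verts.finite_toSet.subset (by rintro _ ⟨r, rfl⟩; exact hym r)
      have : Infinite (ZMod 0) := inferInstanceAs (Infinite ℤ)
      exact Set.infinite_range_of_injective hy.1.1 hfin
    · exfalso
      have h := hy.1.2 0
      have e : (0 + 1 : ZMod (0 + 1)) = 0 := rfl
      rw [e] at h
      exact D2.arc_irrefl _ h
    · omega
  obtain ⟨-, hD1, hD2, hcross⟩ := hD
  have hxc : D.CycleOn x := ⟨hx.1.1, fun i => (hD1 _ _ (hxm _) (hxm _)).2 (hx.1.2 i)⟩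
  have hyc : D.CycleOn y := ⟨hy.1.1, fun i => (hD2 _ _ (hym _) (hym _)).2 (hy.1.2 i)⟩
  have hxy : ∀ s r, x s ≠ y r := fun s r h =>
    Finset.disjoint_left.1 hdisj (hxm s) (h ▸ hym r)
  have hor : ∀ s r, ¬ D.Arc (x s) (y r) → D.Arc (y r) (x s) := fun s r h => by
    rcases hcross _ _ (hxm s) (hym r) with h' | h'
    · exact absurd h'.1 h
    · exact h'.1
  have hnot : ∀ s r, D.Arc (y r) (x s) → ¬ D.Arc (x s) (y r) := fun s r h h2 => by
    rcases hcross _ _ (hxm s) (hym r) with h' | h'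
    · exact h'.2 h
    · exact h'.2 h2
  have key := shift_invariant D x y hxc hyc hxy hor hm l hl3 hln hnoc
  refine ⟨fun s r h => ⟨key s r h, fun k => ?_⟩, fun r s h => ⟨fun k i => ?_, fun k => ?_⟩⟩
  · ext p
    exact exists_mul_eq_iff hn0 (l - 2)
      (fun z => p = (x (s + (k : ZMod n) + z), y (r + (k : ZMod m))))
  · refine hor _ _ fun hc => hnot _ _ h ?_
    -- Shifting on by `n * m * k - k` and `n * i - i` returns to `(s, r)`.
    have hk := key _ _ hc ((n * m - 1) * k) ((n - 1) * i)
    have hnm : 1 ≤ n * m := Nat.mul_pos (by omega) (by omega)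
    convert hk using 2
    · rw [Nat.cast_mul, Nat.cast_mul, Nat.cast_mul, Nat.cast_mul, Nat.cast_sub hnm,
        Nat.cast_sub (by omega : 1 ≤ n)]
      simp only [Nat.cast_mul, CharP.cast_eq_zero, Nat.cast_one]
      ring
    · rw [Nat.cast_mul, Nat.cast_sub hnm]
      simp
  · ext p
    exact exists_mul_eq_iff hn0 (l - 2)
      (fun z => p = (y (r + (k : ZMod m)), x (s + (k : ZMod n) + z)))
end

section
/- Let D_1 and D_2 be two vertex-disjoint digraphs with Hamiltonian cycles C_1 = (x_0, x_1, …, x_{n−1}, x_0) and C_2 = (y_0, y_1, …, y_{m−1}, y_0) respectively, and let D ∈ D_1 ⊕ D_2. Let l be a fixed integer with n+2 ≤ l ≤ n+m such that D has no directed cycle of length l, let h = l − (n+1), and let d = gcd(n, m). Then (with subscripts of the x's taken modulo n and of the y's modulo m): (a) if (x_s, y_r) ∈ A(D), then (x_{s+i}, y_{r+ih}) ∈ A(D) and (x_{s+id}, y_r) ∈ A(D) for every integer i ≥ 0; and (b) if (y_{r'}, x_{s'}) ∈ A(D), then (y_{r'+ih}, x_{s'+i}) ∈ A(D) and (y_{r'},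 x_{s'+id}) ∈ A(D) for every integer i ≥ 0. -/
open FinDigraph

/-- A Hamiltonian cycle indexed by `ZMod n` has `n ≠ 0`: `ZMod 0` is infinite, while a digraph
has finitely many vertices. -/
lemma FinDigraph.IsHamCycle.ne_zero {α : Type} [DecidableEq α] {D : FinDigraph α} {n : ℕ}
    {x : ZMod n → α} (hx : D.IsHamCycle x) : n ≠ 0 := by
  rintro rfl
  have hinj : Function.Injective (fun i : ZMod 0 => (⟨x i, D.arc_mem_left (hx.1.2 i)⟩ : D.verts)) :=
    fun a b hab => hx.1.1 (congrArg Subtype.val hab)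
  have hfin : Finite (ZMod 0) := Finite.of_injective _ hinj
  have hinf : Infinite ℤ := inferInstance
  exact hinf.not_finite hfin

lemma natCast_zmod_inj {n a b : ℕ} (ha : a < n) (hb : b < n)
    (hab : (a : ZMod n) = (b : ZMod n)) : a = b := by
  rw [ZMod.natCast_eq_natCast_iff'] at hab
  rwa [Nat.mod_eq_of_lt ha, Nat.mod_eq_of_lt hb] at hab

/-- All of the cycle `x`, starting at `x (s+1)` and ending at `x s`, followed by the segment
`y r, …, y (r+h)` of `y`, closes up to a cycle of length `n + h + 1`. -/
lemma hasCycle_of_arcs {α : Type} [DecidableEq α] (D : FinDigraph α) {n m : ℕ}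
    (x : ZMod n → α) (y : ZMod m → α) (hn : n ≠ 0)
    (hx : D.CycleOn x) (hy : D.CycleOn y) (hxy : ∀ i j, x i ≠ y j)
    (h : ℕ) (hm : h + 1 ≤ m) (s : ZMod n) (r : ZMod m)
    (h1 : D.Arc (x s) (y r)) (h2 : D.Arc (y (r + (h : ZMod m))) (x (s + 1))) :
    D.HasCycle (n + h + 1) := by
  refine ⟨fun i => if i.val < n then x (s + 1 + (i.val : ZMod n))
    else y (r + ((i.val - n : ℕ) : ZMod m)), ?_, ?_⟩
  · intro a b hab
    have ha := ZMod.val_lt a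
    have hb := ZMod.val_lt b
    apply ZMod.val_injective
    simp only at hab
    split_ifs at hab with h3 h4 h4
    · exact natCast_zmod_inj h3 h4 (add_left_cancel (hx.1 hab))
    · exact absurd hab (hxy _ _)
    · exact absurd hab.symm (hxy _ _)
    · have := natCast_zmod_inj (by omega) (by omega) (add_left_cancel (hy.1 hab))
      omega
  · intro i
    have hi := ZMod.val_lt i
    have hv : (i + 1).val = if i.val + 1 = n + h + 1 then 0 else i.val + 1 := by
      split_ifs with h3
      · rw [ZMod.val_eq_zero]
        have := ZMod.natCast_zmod_val i
        rw [← this, ← Nat.cast_succ, Nat.succ_eq_add_one, h3]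
        exact ZMod.natCast_self _
      · have := ZMod.val_natCast_of_lt (n := n + h + 1) (a := i.val + 1) (by omega)
        rwa [Nat.cast_add, ZMod.natCast_zmod_val, Nat.cast_one] at this
    simp only [hv]
    by_cases h3 : i.val + 1 = n + h + 1
    · have h5 : i.val - n = h := by omega
      rw [if_neg (by omega), if_pos h3, if_pos (by omega), h5]
      simpa using h2
    · rw [if_neg h3]
      by_cases h4 : i.val < n
      · rw [if_pos h4]
        by_cases h5 : i.val + 1 < n
        · rw [if_pos h5]
          have := hx.2 (s + 1 + (i.val : ZMod n))
          rwa [add_assoc (s + 1), ← Nat.cast_succ] at this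
        · have h6 : i.val + 1 = n := by omega
          have h7 : s + 1 + (i.val : ZMod n) = s := by
            have : ((i.val + 1 : ℕ) : ZMod n) = 0 := by rw [h6]; exact ZMod.natCast_self n
            push_cast at this
            rw [add_assoc, add_comm 1, this, add_zero]
          rw [if_neg h5, h7, h6]
          simpa using h1
      · rw [if_neg h4, if_neg (by omega)]
        have := hy.2 (r + ((i.val - n : ℕ) : ZMod m))
        rw [add_assoc r, ← Nat.cast_succ] at this
        rwa [show i.val + 1 - n = (i.val - n).succ by omega]

theorem stmt_15 {α : Type} [DecidableEq α]
    (D1 D2 D : FinDigraph α) {n m : ℕ}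
    (x : ZMod n → α) (y : ZMod m → α)
    (hx : D1.IsHamCycle x) (hy : D2.IsHamCycle y)
    (hdisj : Disjoint D1.verts D2.verts)
    (hD : GenSum2 D1 D2 D)
    (l : ℕ) (hl : n + 2 ≤ l) (hl' : l ≤ n + m) (hnoc : ¬ D.HasCycle l)
    (h : ℕ) (hh : h = l - (n + 1)) (d : ℕ) (hd : d = Nat.gcd n m) :
    (∀ (s : ZMod n) (r : ZMod m), D.Arc (x s) (y r) →
      ∀ i : ℕ,
        D.Arc (x (s + (i : ZMod n))) (y (r + ((i * h : ℕ) : ZMod m))) ∧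
        D.Arc (x (s + ((i * d : ℕ) : ZMod n))) (y r)) ∧
    (∀ (r' : ZMod m) (s' : ZMod n), D.Arc (y r') (x s') →
      ∀ i : ℕ,
        D.Arc (y (r' + ((i * h : ℕ) : ZMod m))) (x (s' + (i : ZMod n))) ∧
        D.Arc (y r') (x (s' + ((i * d : ℕ) : ZMod n)))) := by
  have hn := hx.ne_zero
  obtain ⟨-, hD1, hD2, hD12⟩ := hD
  have mx : ∀ i, x i ∈ D1.verts := fun i => D1.arc_mem_left (hx.1.2 i)
  have my : ∀ i, y i ∈ D2.verts := fun i => D2.arc_mem_left (hy.1.2 i)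
  have hxD : D.CycleOn x := ⟨hx.1.1, fun i => (hD1 _ _ (mx _) (mx _)).2 (hx.1.2 i)⟩
  have hyD : D.CycleOn y := ⟨hy.1.1, fun i => (hD2 _ _ (my _) (my _)).2 (hy.1.2 i)⟩
  have hxy : ∀ i j, x i ≠ y j := fun i j hij =>
    Finset.disjoint_left.1 hdisj (mx i) (hij ▸ my j)
  have hlh : l = n + h + 1 := by omega
  have hnot : ∀ s r, ¬ D.Arc (y r) (x s) → D.Arc (x s) (y r) := fun s r hne => by
    rcases hD12 _ _ (mx s) (my r) with h1 | h1
    · exact h1.1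
    · exact absurd h1.1 hne
  have hanti : ∀ s r, D.Arc (y r) (x s) → ¬ D.Arc (x s) (y r) := fun s r h1 h2 => by
    rcases hD12 _ _ (mx s) (my r) with h3 | h3
    · exact h3.2 h1
    · exact h3.2 h2
  have step : ∀ s r, D.Arc (x s) (y r) → D.Arc (x (s + 1)) (y (r + (h : ZMod m))) := by
    intro s r h1
    refine hnot _ _ fun h2 => hnoc ?_
    rw [hlh]
    exact hasCycle_of_arcs D x y hn hxD hyD hxy h (by omega) s r h1 h2
  have iter : ∀ s r, D.Arc (x s) (y r) → ∀ i : ℕ,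
      D.Arc (x (s + (i : ZMod n))) (y (r + ((i * h : ℕ) : ZMod m))) := by
    intro s r h1 i
    induction i with
    | zero => simpa using h1
    | succ k ih =>
      have := step _ _ ih
      convert this using 2
      · push_cast; ring
      · push_cast; ring
  have bezout : ∃ k : ℕ, ((m * k : ℕ) : ZMod n) = (d : ZMod n) := by
    -- `k` is the representative modulo `n` of the Bézout coefficient of `m`.
    have : NeZero n := ⟨hn⟩
    refine ⟨((Nat.gcdB n m : ℤ) : ZMod n).val, ?_⟩
    have hb := congrArg (Int.cast : ℤ → ZMod n) (Nat.gcd_eq_gcd_ab n m)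
    push_cast at hb
    rw [hd, hb]
    simp
  have iterd : ∀ s r, D.Arc (x s) (y r) → ∀ i : ℕ,
      D.Arc (x (s + ((i * d : ℕ) : ZMod n))) (y r) := by
    intro s r h1 i
    obtain ⟨k, hk⟩ := bezout
    have := iter s r h1 (m * k * i)
    convert this using 2
    · rw [Nat.cast_mul (m * k), hk, Nat.cast_mul, mul_comm]
    · simp
  refine ⟨fun s r h1 i => ⟨iter s r h1 i, iterd s r h1 i⟩, fun r s h1 i => ⟨?_, ?_⟩⟩
  · by_contra h2
    -- After `i * (n * m)` shifts in total both indices are back at `s` and `r`.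
    have h3 := iter _ _ (hnot _ _ h2) (i * (n * m - 1))
    have hm : m ≠ 0 := by omega
    have e : i + i * (n * m - 1) = i * (n * m) := by
      obtain ⟨t, ht⟩ := Nat.exists_eq_succ_of_ne_zero (Nat.mul_ne_zero hn hm)
      rw [ht, Nat.succ_eq_add_one, Nat.add_sub_cancel]; ring
    rw [add_assoc, add_assoc, ← Nat.cast_add, ← Nat.cast_add, ← Nat.add_mul, e] at h3
    apply hanti s r h1
    simpa using h3
  · by_contra h2
    have h3 := iterd _ _ (hnot _ _ h2) (i * (n - 1))
    have e : i + i * (n - 1) = i * n := by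
      obtain ⟨t, ht⟩ := Nat.exists_eq_succ_of_ne_zero hn
      rw [ht, Nat.succ_eq_add_one, Nat.add_sub_cancel]; ring
    rw [add_assoc, ← Nat.cast_add, ← Nat.add_mul, e] at h3
    apply hanti s r h1
    simpa using h3
end
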